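/- Let P be a flag 3-polytope. If a simple 4-loop L_4 = (F_i, F_j, F_k, F_l) is not a 4-belt, then L_4 consists of the four facets surrounding an edge of P (two opposite facets of the loop meet along an edge whose endpoints lie on the two other facets), and L_4 borders a k-loop with k = s_i + s_j + s_k + s_l − 14 ≥ 2, where s_i, s_j, s_k, s_l are the numbers of edges of the four facets. -/

import Mathlib

open Set

noncomputable section

/-- The ambient space `ℝ³`. -/
abbrev E3 := EuclideanSpace ℝ (Fin 3)

/-- The cyclic successor in `Fin k`. -/
def nxt {k : ℕ} (i : Fin k) : Fin k := ⟨(i.1 + 1) % k, Nat.mod_lt _ i.pos⟩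

/-- The cyclic predecessor in `Fin k`. -/
def prv {k : ℕ} (i : Fin k) : Fin k := ⟨(i.1 + (k - 1)) % k, Nat.mod_lt _ i.pos⟩

/-- A convex polytope in `ℝ³`: the convex hull of a finite set of points. -/
def IsPolytope (P : Set E3) : Prop := ∃ V : Finset E3, P = convexHull ℝ (V : Set E3)

/-- The dimension of a subset of `ℝ³` (the dimension of its affine hull). -/
def setDim (A : Set E3) : ℕ := Module.finrank ℝ ↥(vectorSpan ℝ A)

/-- A face of a polytope: a nonempty closed convex extreme subset. -/
def IsFaceOf (F P : Set E3) : Prop :=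
  F.Nonempty ∧ IsClosed F ∧ Convex ℝ F ∧ IsExtreme ℝ P F

/-- A facet: a `2`-dimensional face. -/
def IsFacetOf (F P : Set E3) : Prop := IsFaceOf F P ∧ setDim F = 2

/-- An edge: a `1`-dimensional face. -/
def IsEdgeOf (F P : Set E3) : Prop := IsFaceOf F P ∧ setDim F = 1

/-- A vertex: a point whose singleton is a face. -/
def IsVertexOf (v : E3) (P : Set E3) : Prop := IsFaceOf {v} P

/-- The set of facets of `P`. -/
def facets (P : Set E3) : Set (Set E3) := {F | IsFacetOf F P}

/-- A simple 3-polytope: a 3-dimensional convex polytope each of whose vertices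
is contained in exactly 3 facets. -/
def IsSimplePolytope3 (P : Set E3) : Prop :=
  IsPolytope P ∧ setDim P = 3 ∧
    ∀ v : E3, IsVertexOf v P → {F | IsFacetOf F P ∧ v ∈ F}.ncard = 3

/-- The number of edges of a facet `F` of `P`. -/
def facetEdges (P F : Set E3) : ℕ := {e | IsEdgeOf e P ∧ e ⊆ F}.ncard

/-- `pVec P k` is the number of `k`-gonal facets of `P`. -/
def pVec (P : Set E3) (k : ℕ) : ℕ := {F | IsFacetOf F P ∧ facetEdges P F = k}.ncard

/-- A (mathematical) fullerene: a simple 3-polytope with all facets pentagons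
and hexagons. -/
def IsFullerene (P : Set E3) : Prop :=
  IsSimplePolytope3 P ∧ ∀ F, IsFacetOf F P → facetEdges P F = 5 ∨ facetEdges P F = 6

/-- A `k`-loop in `P` (`k ≥ 2`): a cyclic sequence of facets in which
(cyclically) consecutive facets intersect in an edge; a `1`-loop is a single facet. -/
def IsLoop (P : Set E3) {k : ℕ} (L : Fin k → Set E3) : Prop :=
  0 < k ∧ (∀ i, IsFacetOf (L i) P) ∧ (2 ≤ k → ∀ i, IsEdgeOf (L i ∩ L (nxt i)) P)

/-- A simple loop: a loop with pairwise different facets. -/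
def IsSimpleLoop (P : Set E3) {k : ℕ} (L : Fin k → Set E3) : Prop :=
  IsLoop P L ∧ Function.Injective L

/-- A `k`-belt (`k ≥ 3`): a `k`-loop such that for `k = 3` the three facets have empty
total intersection, and for `k ≥ 4` two facets intersect iff they are cyclically successive. -/
def IsBelt (P : Set E3) {k : ℕ} (L : Fin k → Set E3) : Prop :=
  3 ≤ k ∧ IsLoop P L ∧
    (k = 3 → ∀ i, L i ∩ L (nxt i) ∩ L (nxt (nxt i)) = ∅) ∧
    (4 ≤ k → ∀ p q, p ≠ q → ((L p ∩ L q).Nonempty ↔ q = nxt p ∨ p = nxt q))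

/-- A flag 3-polytope: a simple 3-polytope different from the tetrahedron
(i.e. not having exactly 4 facets) without 3-belts. -/
def IsFlag3Polytope (P : Set E3) : Prop :=
  IsSimplePolytope3 P ∧ (facets P).ncard ≠ 4 ∧ ∀ B : Fin 3 → Set E3, ¬ IsBelt P B

/-- `γ` is the simple edge-cycle of `P` traced by the cyclically ordered distinct
vertices `v 0, …, v (n-1)` (`n ≥ 3`), consecutive ones joined by edges of `P`. -/
def IsSimpleEdgeCycleVia (P γ : Set E3) {n : ℕ} (v : Fin n → E3) : Prop :=
  3 ≤ n ∧ Function.Injective v ∧ (∀ i, IsVertexOf (v i) P) ∧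
    (∀ i, IsEdgeOf (segment ℝ (v i) (v (nxt i))) P) ∧
    γ = ⋃ i, segment ℝ (v i) (v (nxt i))

/-- A simple edge-cycle in the graph of `P`. -/
def IsSimpleEdgeCycle (P γ : Set E3) : Prop :=
  ∃ (n : ℕ) (v : Fin n → E3), IsSimpleEdgeCycleVia P γ v

/-- `C` is a connected component of the set `A`. -/
def IsCompOf (C A : Set E3) : Prop := ∃ x ∈ A, C = connectedComponentIn A x

/-- The loop `L` is obtained by walking round the simple edge-cycle `γ` inside the
connected component `C` of `∂P ∖ γ`: the facets of `L` lie on the side `C`, and the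
edges of `γ`, in cyclic order, lie in the facets of `L` in cyclic order (the loop
index advancing exactly when the facet changes, and making exactly one turn). -/
def WalksRound (P γ C : Set E3) {k : ℕ} (L : Fin k → Set E3) : Prop :=
  IsLoop P L ∧ (∀ i, intrinsicInterior ℝ (L i) ⊆ C) ∧
    ∃ (n : ℕ) (v : Fin n → E3) (φ : Fin n → Fin k),
      IsSimpleEdgeCycleVia P γ v ∧
      (∀ i, segment ℝ (v i) (v (nxt i)) ⊆ L (φ i)) ∧
      (∀ i, φ (nxt i) = φ i ∨ φ (nxt i) = nxt (φ i)) ∧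
      Function.Surjective φ ∧
      (2 ≤ k → (Finset.univ.filter (fun i : Fin n => φ (nxt i) ≠ φ i)).card = k)

/-- Two loops border each other: they are obtained by walking round the same simple
edge-cycle `γ` in the two different connected components of `∂P ∖ γ`. -/
def Borders (P : Set E3) {k₁ k₂ : ℕ} (L₁ : Fin k₁ → Set E3) (L₂ : Fin k₂ → Set E3) : Prop :=
  ∃ γ C₁ C₂ : Set E3, IsCompOf C₁ (frontier P \ γ) ∧ IsCompOf C₂ (frontier P \ γ) ∧
    C₁ ≠ C₂ ∧ WalksRound P γ C₁ L₁ ∧ WalksRound P γ C₂ L₂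

/-- A loop surrounds the facet `F` if it borders the `1`-loop `(F)`. -/
def Surrounds (P : Set E3) {k : ℕ} (L : Fin k → Set E3) (F : Set E3) : Prop :=
  IsFacetOf F P ∧ Borders P L (fun _ : Fin 1 => F)

/-- The number of edges of `P` lying in the facet `F` and in the set `γ`. -/
def edgesInCommon (P F γ : Set E3) : ℕ := {e | IsEdgeOf e P ∧ e ⊆ F ∧ e ⊆ γ}.ncard
/-- A simple 3-polytope all of whose facets are pentagons and hexagons except for
at most one exceptional facet, which is a quadrangle or a heptagon. -/
def IsAlmostFullerene (P : Set E3) : Prop :=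
  IsSimplePolytope3 P ∧
    (∀ F, IsFacetOf F P → facetEdges P F ∈ ({4, 5, 6, 7} : Set ℕ)) ∧
    {F | IsFacetOf F P ∧ (facetEdges P F = 4 ∨ facetEdges P F = 7)}.ncard ≤ 1

/-- The (combinatorial) dodecahedron: a simple 3-polytope with all facets pentagons. -/
def IsDodecahedron (P : Set E3) : Prop :=
  IsSimplePolytope3 P ∧ ∀ F, IsFacetOf F P → facetEdges P F = 5

/-- `e` and `e'` are opposite edges of the hexagonal facet `H`: they are disjoint and no
edge of `H` meets both of them. -/
def OppositeEdges (P H e e' : Set E3) : Prop :=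
  IsEdgeOf e P ∧ IsEdgeOf e' P ∧ e ⊆ H ∧ e' ⊆ H ∧ e ∩ e' = ∅ ∧
    ∀ e'', IsEdgeOf e'' P → e'' ⊆ H → (e'' ∩ e).Nonempty → e'' ≠ e → e'' ∩ e' = ∅

/-- A cap: a pentagonal facet `F₀` together with a surrounding 5-belt of pentagons. -/
def IsCapOf (P F₀ : Set E3) (L : Fin 5 → Set E3) : Prop :=
  IsFacetOf F₀ P ∧ facetEdges P F₀ = 5 ∧ (∀ i, facetEdges P (L i) = 5) ∧
    IsBelt P L ∧ Surrounds P L F₀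

/-- The number of 5-belts of `P` (counted as sets of facets). -/
def fiveBeltCount (P : Set E3) : ℕ :=
  {S : Set (Set E3) | ∃ B : Fin 5 → Set E3, IsBelt P B ∧ S = Set.range B}.ncard

/-- The structure of the `k`-th fullerene of Family I: two caps separated by `k`
hexagonal 5-belts, each bordering the next (for `k = 0` the caps border each other,
giving the dodecahedron). -/
def FamilyI (P : Set E3) (k : ℕ) : Prop :=
  ∃ (F₀ F₀' : Set E3) (L L' : Fin 5 → Set E3) (B : ℕ → Fin 5 → Set E3),
    IsCapOf P F₀ L ∧ IsCapOf P F₀' L' ∧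
    (∀ i < k, IsBelt P (B i) ∧ ∀ j, facetEdges P (B i j) = 6) ∧
    (∀ i, i + 1 < k → Borders P (B i) (B (i + 1))) ∧
    (0 < k → Borders P L (B 0) ∧ Borders P (B (k - 1)) L') ∧
    (k = 0 → Borders P L L') ∧
    facets P = {F₀, F₀'} ∪ Set.range L ∪ Set.range L' ∪ ⋃ i ∈ Set.Iio k, Set.range (B i)

/-- `P` is obtained from `Q` by an `(s,k;t₀,t₁)`-truncation with new edge `Enew`:
`P` is cut off from `Q` by a halfspace `{f ≤ c}` whose boundary plane crosses exactly
two edges `E₀ ≠ E₁` of a `k`-gonal facet `F` of `Q`, cutting off exactly `s` vertices,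
all belonging to `F`; `G₀` and `G₁` are the facets meeting `F` along `E₀` and `E₁`, and
they are `t₀`- and `t₁`-gons; `Enew` is the new edge dividing `F`. -/
def IsTruncation (s k t₀ t₁ : ℕ) (Q P Enew : Set E3) : Prop :=
  IsSimplePolytope3 Q ∧ IsSimplePolytope3 P ∧
    ∃ (F E₀ E₁ G₀ G₁ : Set E3) (f : E3 →ₗ[ℝ] ℝ) (c : ℝ),
      IsFacetOf F Q ∧ facetEdges Q F = k ∧
      IsEdgeOf E₀ Q ∧ IsEdgeOf E₁ Q ∧ E₀ ≠ E₁ ∧ E₀ ⊆ F ∧ E₁ ⊆ F ∧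
      IsFacetOf G₀ Q ∧ IsFacetOf G₁ Q ∧ G₀ ≠ F ∧ G₁ ≠ F ∧ E₀ ⊆ G₀ ∧ E₁ ⊆ G₁ ∧
      facetEdges Q G₀ = t₀ ∧ facetEdges Q G₁ = t₁ ∧
      P = Q ∩ {x | f x ≤ c} ∧
      (∀ e, IsEdgeOf e Q → (∃ x ∈ e, c < f x) → (∃ x ∈ e, f x < c) → e = E₀ ∨ e = E₁) ∧
      (∃ x ∈ E₀, c < f x) ∧ (∃ x ∈ E₀, f x < c) ∧
      (∃ x ∈ E₁, c < f x) ∧ (∃ x ∈ E₁, f x < c) ∧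
      (∀ v, IsVertexOf v Q → f v ≠ c) ∧
      {v | IsVertexOf v Q ∧ c < f v}.ncard = s ∧
      (∀ v, IsVertexOf v Q → c < f v → v ∈ F) ∧
      Enew = F ∩ {x | f x = c}

/-- Combinatorial equivalence of polytopes: an inclusion-preserving bijection
between the sets of faces. -/
def CombEquiv (P Q : Set E3) : Prop :=
  ∃ φ : {A : Set E3 // IsFaceOf A P} ≃ {A : Set E3 // IsFaceOf A Q},
    ∀ A B : {A : Set E3 // IsFaceOf A P}, A.1 ⊆ B.1 ↔ (φ A).1 ⊆ (φ B).1

/-- Combinatorial equivalence sending the face `Ep` of `P` to the face `Eq` of `Q`. -/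
def CombEquivMapping (P Q Ep Eq : Set E3) : Prop :=
  ∃ φ : {A : Set E3 // IsFaceOf A P} ≃ {A : Set E3 // IsFaceOf A Q},
    (∀ A B : {A : Set E3 // IsFaceOf A P}, A.1 ⊆ B.1 ↔ (φ A).1 ⊆ (φ B).1) ∧
    ∀ h : IsFaceOf Ep P, ((φ ⟨Ep, h⟩) : {A : Set E3 // IsFaceOf A Q}).1 = Eq

/-- The straightening of `P` along the edge `E` is defined: `P` is combinatorially
obtained from some simple 3-polytope `Q` by an `(s,k)`-truncation whose new edge
corresponds to `E`. -/
def StraighteningDefined (P E : Set E3) : Prop :=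
  ∃ (s k t₀ t₁ : ℕ) (Q P₁ E₁ : Set E3),
    IsTruncation s k t₀ t₁ Q P₁ E₁ ∧ CombEquivMapping P P₁ E E₁

/-- `P` is obtained from `Q` by one of the truncations
`(1;4,5)`, `(1;5,5)`, `(2,6;4,5)`, `(2,6;5,5)`, `(2,6;5,6)`, `(2,7;5,5)`, `(2,7;5,6)`. -/
def FullereneStep (Q P : Set E3) : Prop :=
  ∃ (s k t₀ t₁ : ℕ) (Enew : Set E3), IsTruncation s k t₀ t₁ Q P Enew ∧
    ((s = 1 ∧ (({t₀, t₁} : Finset ℕ) = {4, 5} ∨ ({t₀, t₁} : Finset ℕ) = {5, 5})) ∨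
     (s = 2 ∧ k = 6 ∧ (({t₀, t₁} : Finset ℕ) = {4, 5} ∨ ({t₀, t₁} : Finset ℕ) = {5, 5} ∨
        ({t₀, t₁} : Finset ℕ) = {5, 6})) ∨
     (s = 2 ∧ k = 7 ∧ (({t₀, t₁} : Finset ℕ) = {5, 5} ∨ ({t₀, t₁} : Finset ℕ) = {5, 6})))

/-!
At a vertex of a simple 3-polytope the normals of its three facets are linearly independent. Hence
two distinct facets that meet share an edge, and the facets adjacent to a given facet form a cycle,
consecutive ones meeting at a vertex.

If the loop is not a belt, two opposite facets of it meet. There are no 3-belts, so these two meet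
each of the other two at a vertex; and the other two are disjoint, since four pairwise meeting
facets of a flag polytope would be the facets of a tetrahedron. So the loop surrounds an edge.

Going once round the outside of the loop, each facet contributes the edges it does not share with
another facet of the loop: `s - 3` of them for the two opposite facets and `s - 2` for the other
two. This is a closed walk of `Σ s - 10` edges, forming a simple edge-cycle `γ`. At four of its
vertices the walk changes the facet of the loop and keeps the outer facet, at the other `Σ s - 14`
it changes the outer facet, so the loop on the far side has length `Σ s - 14`. Each facet of a flag
polytope has at least four edges, so this is at least 2. The curve `γ` does separate the two sides:
off `γ`, a boundary point lies either only in facets of the loop or only in other facets, and both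
conditions are closed.
-/

section Convex

variable {E : Type*} [NormedAddCommGroup E] [NormedSpace ℝ E] {A : Set E} {x y : E}

theorem exists_add_smul_mem_of_mem_interior (hx : x ∈ interior A) (u : E) :
    ∃ ε : ℝ, 0 < ε ∧ x + ε • u ∈ A := by
  have hcont : Continuous fun t : ℝ ↦ x + t • u := by fun_prop
  have hnear : ∀ᶠ t in nhds (0 : ℝ), x + t • u ∈ A :=
    hcont.continuousAt.eventually_mem (by simpa using mem_interior_iff_mem_nhds.1 hx)
  obtain ⟨ε, hmem, hε⟩ :=
    ((hnear.filter_mono nhdsWithin_le_nhds).and (self_mem_nhdsWithin (s := Ioi 0))).exists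
  exact ⟨ε, hε, hmem⟩

theorem exists_add_smul_sub_mem_of_mem_intrinsicInterior (hx : x ∈ intrinsicInterior ℝ A)
    (hy : y ∈ affineSpan ℝ A) : ∃ ε : ℝ, 0 < ε ∧ x + ε • (x - y) ∈ A := by
  obtain ⟨x', hx', rfl⟩ := mem_intrinsicInterior.1 hx
  let line : ℝ → affineSpan ℝ A := fun t ↦
    ⟨AffineMap.lineMap y (x' : E) (1 + t), AffineMap.lineMap_mem _ hy x'.2⟩
  have hline : ∀ t, (line t : E) = x' + t • ((x' : E) - y) := fun t ↦ by
    simp only [line, AffineMap.lineMap_apply, vsub_eq_sub, vadd_eq_add]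
    module
  have hcont : Continuous line := by
    refine Continuous.subtype_mk ?_ _
    simp only [AffineMap.lineMap_apply, vsub_eq_sub, vadd_eq_add]
    fun_prop
  have hnear : ∀ᶠ t in nhds (0 : ℝ), line t ∈ ((↑) ⁻¹' A : Set (affineSpan ℝ A)) := by
    refine hcont.continuousAt.eventually_mem ?_
    rw [show line 0 = x' from Subtype.ext (by simp [hline])]
    exact mem_interior_iff_mem_nhds.1 hx'
  obtain ⟨ε, hmem, hε⟩ :=
    ((hnear.filter_mono nhdsWithin_le_nhds).and (self_mem_nhdsWithin (s := Ioi 0))).exists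
  exact ⟨ε, hε, by rw [← hline]; exact hmem⟩

theorem mem_openSegment_add_smul_sub (x y : E) {ε : ℝ} (hε : 0 < ε) :
    x ∈ openSegment ℝ y (x + ε • (x - y)) := by
  have hb : (1 + ε)⁻¹ * (1 + ε) = 1 := inv_mul_cancel₀ (by positivity)
  refine ⟨ε * (1 + ε)⁻¹, (1 + ε)⁻¹, by positivity, by positivity, by linarith, ?_⟩
  calc (ε * (1 + ε)⁻¹) • y + (1 + ε)⁻¹ • (x + ε • (x - y))
      = ((1 + ε)⁻¹ * (1 + ε)) • x := by module
    _ = x := by rw [hb, one_smul]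

theorem mem_of_isExtreme_of_add_smul_sub_mem {F : Set E} (hF : IsExtreme ℝ A F) (hx : x ∈ F)
    (hy : y ∈ A) {ε : ℝ} (hε : 0 < ε) (h : x + ε • (x - y) ∈ A) : y ∈ F :=
  hF.left_mem_of_mem_openSegment hy h hx (mem_openSegment_add_smul_sub x y hε)

theorem eq_of_isExtreme_of_mem_interior {F : Set E} (hF : IsExtreme ℝ A F) (hxF : x ∈ F)
    (hx : x ∈ interior A) : F = A := by
  refine hF.subset.antisymm fun y hy ↦ ?_
  obtain ⟨ε, hε, h⟩ := exists_add_smul_mem_of_mem_interior hx (x - y)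
  exact mem_of_isExtreme_of_add_smul_sub_mem hF hxF hy hε h

theorem isExposed_setOf_eq {f : E →L[ℝ] ℝ} {c : ℝ} (h : ∀ x ∈ A, f x ≤ c) :
    IsExposed ℝ A {x ∈ A | f x = c} := by
  rintro ⟨z, hz, rfl⟩
  refine ⟨f, ext fun x ↦ and_congr_right fun hx ↦ ⟨fun hfx y hy ↦ hfx ▸ h y hy, fun hmax ↦ ?_⟩⟩
  exact (h x hx).antisymm (hmax z hz)

theorem le_on_of_forall_mem_interior_le (hA : Convex ℝ A) (hne : (interior A).Nonempty)
    {f : E →L[ℝ] ℝ} {c : ℝ} (h : ∀ x ∈ interior A, f x ≤ c) : ∀ x ∈ A, f x ≤ c := by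
  intro x hx
  have hx' : x ∈ closure (interior A) := by
    rw [hA.closure_interior_eq_closure_of_nonempty_interior hne]
    exact subset_closure hx
  exact (isClosed_le f.continuous continuous_const).closure_subset_iff.2 h hx'

theorem vectorSpan_le_ker_of_forall_mem_eq {f : E →ₗ[ℝ] ℝ} {c : ℝ} (h : ∀ x ∈ A, f x = c) :
    vectorSpan ℝ A ≤ LinearMap.ker f := by
  rw [vectorSpan_def, Submodule.span_le]
  rintro _ ⟨x, hx, y, hy, rfl⟩
  simp [h x hx, h y hy]

theorem eq_of_vectorSpan_le_ker {f : E →ₗ[ℝ] ℝ} (hf : vectorSpan ℝ A ≤ LinearMap.ker f)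
    (hx : x ∈ A) (hy : y ∈ A) : f x = f y := by
  have h := hf (vsub_mem_vectorSpan ℝ hx hy)
  rwa [LinearMap.mem_ker, vsub_eq_sub, map_sub, sub_eq_zero] at h

theorem affineSpan_eq_of_subset_of_finrank_vectorSpan_le [FiniteDimensional ℝ E] {B : Set E}
    (hAB : A ⊆ B) (hA : A.Nonempty)
    (h : Module.finrank ℝ (vectorSpan ℝ B) ≤ Module.finrank ℝ (vectorSpan ℝ A)) :
    affineSpan ℝ A = affineSpan ℝ B := by
  obtain ⟨p, hp⟩ := hA
  refine AffineSubspace.ext_of_direction_eq ?_ ⟨p, mem_affineSpan ℝ hp, mem_affineSpan ℝ (hAB hp)⟩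
  rw [direction_affineSpan, direction_affineSpan]
  exact Submodule.eq_of_le_of_finrank_le (vectorSpan_mono ℝ hAB) h

theorem exists_max_add_smul_mem (hA : IsCompact A) (hx : x ∈ A) {u : E} (hu : u ≠ 0) :
    ∃ T : ℝ, 0 ≤ T ∧ x + T • u ∈ A ∧ ∀ t, x + t • u ∈ A → t ≤ T := by
  have hemb : Topology.IsClosedEmbedding fun t : ℝ ↦ x + t • u :=
    (Homeomorph.addLeft x).isClosedEmbedding.comp (isClosedEmbedding_smul_left hu)
  have h0 : (0 : ℝ) ∈ (fun t : ℝ ↦ x + t • u) ⁻¹' A := by simpa using hx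
  obtain ⟨T, hT, hmax⟩ := (hemb.isCompact_preimage hA).exists_isMaxOn ⟨0, h0⟩ continuousOn_id
  exact ⟨T, hmax h0, hT, fun t ht ↦ hmax ht⟩

theorem finrank_vectorSpan_segment (hxy : x ≠ y) :
    Module.finrank ℝ (vectorSpan ℝ (segment ℝ x y)) = 1 := by
  rw [← convexHull_pair, ← direction_affineSpan, affineSpan_convexHull, direction_affineSpan,
    vectorSpan_pair, finrank_span_singleton (vsub_ne_zero.2 hxy)]

end Convex

/-! ### Faces -/

namespace IsFaceOf

variable {P A B F G : Set E3} {x y : E3}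

theorem nonempty (hF : IsFaceOf F P) : F.Nonempty := hF.1

theorem isClosed (hF : IsFaceOf F P) : IsClosed F := hF.2.1

theorem convex (hF : IsFaceOf F P) : Convex ℝ F := hF.2.2.1

theorem isExtreme (hF : IsFaceOf F P) : IsExtreme ℝ P F := hF.2.2.2

theorem subset (hF : IsFaceOf F P) : F ⊆ P := hF.isExtreme.subset

theorem inter (hF : IsFaceOf F P) (hG : IsFaceOf G P) (h : (F ∩ G).Nonempty) :
    IsFaceOf (F ∩ G) P :=
  ⟨h, hF.isClosed.inter hG.isClosed, hF.convex.inter hG.convex, hF.isExtreme.inter hG.isExtreme⟩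

theorem nonempty_intrinsicInterior (hF : IsFaceOf F P) : (intrinsicInterior ℝ F).Nonempty :=
  hF.nonempty.intrinsicInterior hF.convex

theorem subset_of_mem_intrinsicInterior (hF : IsFaceOf F P) (hAP : A ⊆ P)
    (hx : x ∈ intrinsicInterior ℝ A) (hxF : x ∈ F) : A ⊆ F := fun y hy ↦ by
  obtain ⟨ε, hε, h⟩ := exists_add_smul_sub_mem_of_mem_intrinsicInterior hx (mem_affineSpan ℝ hy)
  exact mem_of_isExtreme_of_add_smul_sub_mem hF.isExtreme hxF (hAP hy) hε (hAP h)

theorem mem_of_mem_affineSpan (hF : IsFaceOf F P) (hy : y ∈ P) (hyF : y ∈ affineSpan ℝ F) :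
    y ∈ F := by
  obtain ⟨x, hx⟩ := hF.nonempty_intrinsicInterior
  obtain ⟨ε, hε, h⟩ := exists_add_smul_sub_mem_of_mem_intrinsicInterior hx hyF
  exact mem_of_isExtreme_of_add_smul_sub_mem hF.isExtreme (intrinsicInterior_subset hx) hy hε
    (hF.subset h)

theorem eq_of_subset_of_setDim_le (hA : IsFaceOf A P) (hAB : A ⊆ B) (hBP : B ⊆ P)
    (hdim : setDim B ≤ setDim A) : A = B := by
  refine hAB.antisymm fun y hy ↦ hA.mem_of_mem_affineSpan (hBP hy) ?_
  rw [affineSpan_eq_of_subset_of_finrank_vectorSpan_le hAB hA.nonempty hdim]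
  exact mem_affineSpan ℝ hy

end IsFaceOf

theorem IsFacetOf.eq_of_subset {P F G : Set E3} (hF : IsFacetOf F P) (hG : IsFacetOf G P)
    (h : F ⊆ G) : F = G :=
  hF.1.eq_of_subset_of_setDim_le h hG.1.subset (hG.2.trans hF.2.symm).le

theorem isVertexOf_iff_mem_extremePoints {P : Set E3} {v : E3} :
    IsVertexOf v P ↔ v ∈ P.extremePoints ℝ := by
  rw [← isExtreme_singleton]
  exact ⟨fun h ↦ h.isExtreme,
    fun h ↦ ⟨singleton_nonempty v, isClosed_singleton, convex_singleton v, h⟩⟩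

theorem IsVertexOf.mem {P : Set E3} {v : E3} (hv : IsVertexOf v P) : v ∈ P :=
  hv.subset rfl

/-! ### Facets of a 3-polytope -/

/-- A 3-dimensional convex polytope in `ℝ³`, not necessarily simple. -/
structure IsPolytope3 (P : Set E3) : Prop where
  isPolytope : IsPolytope P
  setDim_eq : setDim P = 3

theorem finrank_ker_eq_two {f : E3 →L[ℝ] ℝ} (hf : f ≠ 0) :
    Module.finrank ℝ (LinearMap.ker (f : E3 →ₗ[ℝ] ℝ)) = 2 := by
  have hf' : (f : E3 →ₗ[ℝ] ℝ) ≠ 0 := fun h ↦ hf (ContinuousLinearMap.coe_injective h)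
  have hadd := LinearMap.finrank_range_add_finrank_ker (f : E3 →ₗ[ℝ] ℝ)
  rw [LinearMap.range_eq_top.2 (LinearMap.surjective hf'), finrank_top, Module.finrank_self,
    finrank_euclideanSpace_fin] at hadd
  omega

theorem setDim_le_two_of_forall_mem_eq {A : Set E3} {f : E3 →L[ℝ] ℝ} {c : ℝ} (hf : f ≠ 0)
    (h : ∀ x ∈ A, f x = c) : setDim A ≤ 2 :=
  finrank_ker_eq_two hf ▸
    Submodule.finrank_mono (vectorSpan_le_ker_of_forall_mem_eq (f := (f : E3 →ₗ[ℝ] ℝ)) h)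

/-- The inequality `f ≤ c` holds on `P`, strictly in the interior, and `F` is its equality set. -/
structure IsFacetInequality (P F : Set E3) (f : E3 →L[ℝ] ℝ) (c : ℝ) : Prop where
  le : ∀ x ∈ P, f x ≤ c
  eq_setOf : F = {x ∈ P | f x = c}
  lt : ∀ x ∈ interior P, f x < c

/-- `f` is a nonzero functional whose maximum over `P` is attained at `x`. -/
structure IsSupportingAt (P : Set E3) (x : E3) (f : E3 →L[ℝ] ℝ) : Prop where
  ne_zero : f ≠ 0
  le : ∀ y ∈ P, f y ≤ f x

namespace IsPolytope3

variable {P F : Set E3} {x : E3}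

theorem convex (hP : IsPolytope3 P) : Convex ℝ P := by
  obtain ⟨V, rfl⟩ := hP.isPolytope
  exact convex_convexHull ℝ _

theorem isCompact (hP : IsPolytope3 P) : IsCompact P := by
  obtain ⟨V, rfl⟩ := hP.isPolytope
  exact V.finite_toSet.isCompact_convexHull (𝕜 := ℝ)

theorem finite_vertices (hP : IsPolytope3 P) : {v | IsVertexOf v P}.Finite := by
  obtain ⟨V, rfl⟩ := hP.isPolytope
  exact V.finite_toSet.subset fun v hv ↦
    extremePoints_convexHull_subset (isVertexOf_iff_mem_extremePoints.1 hv)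

theorem nonempty (hP : IsPolytope3 P) : P.Nonempty := by
  refine nonempty_iff_ne_empty.2 fun h ↦ ?_
  have hdim := hP.setDim_eq
  rw [h, setDim, vectorSpan_empty, finrank_bot] at hdim
  omega

theorem interior_nonempty (hP : IsPolytope3 P) : (interior P).Nonempty := by
  rw [hP.convex.interior_nonempty_iff_affineSpan_eq_top,
    AffineSubspace.affineSpan_eq_top_iff_vectorSpan_eq_top_of_nonempty ℝ E3 E3 hP.nonempty]
  exact Submodule.eq_top_of_finrank_eq (hP.setDim_eq.trans finrank_euclideanSpace_fin.symm)

theorem ne_zero_of_forall_mem_interior_lt (hP : IsPolytope3 P) {f : E3 →L[ℝ] ℝ}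
    (h : ∀ y ∈ interior P, f y < f x) : f ≠ 0 := by
  rintro rfl
  obtain ⟨p, hp⟩ := hP.interior_nonempty
  exact lt_irrefl _ (h p hp)

theorem disjoint_interior (hP : IsPolytope3 P) (hF : IsFacetOf F P) :
    Disjoint (interior P) F := by
  refine Set.disjoint_left.2 fun x hx hxF ↦ ?_
  have hdim := hF.2
  rw [eq_of_isExtreme_of_mem_interior hF.1.isExtreme hxF hx, hP.setDim_eq] at hdim
  omega

theorem isFaceOf_setOf_eq (hP : IsPolytope3 P) {f : E3 →L[ℝ] ℝ} {c : ℝ} (h : ∀ x ∈ P, f x ≤ c)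
    (hne : {x ∈ P | f x = c}.Nonempty) : IsFaceOf {x ∈ P | f x = c} P :=
  have hexp := isExposed_setOf_eq h
  ⟨hne, hexp.isClosed hP.isCompact.isClosed, hexp.convex hP.convex, hexp.isExtreme⟩

theorem exists_isFacetInequality (hP : IsPolytope3 P) (hF : IsFacetOf F P) :
    ∃ fc : (E3 →L[ℝ] ℝ) × ℝ, IsFacetInequality P F fc.1 fc.2 := by
  obtain ⟨f, c, hlt, hge⟩ := geometric_hahn_banach_open hP.convex.interior isOpen_interior
    hF.1.convex (hP.disjoint_interior hF)
  have hle : ∀ x ∈ P, f x ≤ c :=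
    le_on_of_forall_mem_interior_le hP.convex hP.interior_nonempty fun x hx ↦ (hlt x hx).le
  have heq : ∀ x ∈ F, f x = c := fun x hx ↦ (hle x (hF.1.subset hx)).antisymm (hge x hx)
  obtain ⟨x, hx⟩ := hF.1.nonempty
  have hf : f ≠ 0 := hP.ne_zero_of_forall_mem_interior_lt (x := x) (by rwa [heq x hx])
  refine ⟨(f, c), hle, ?_, hlt⟩
  refine hF.1.eq_of_subset_of_setDim_le (fun x hx ↦ ⟨hF.1.subset hx, heq x hx⟩) (sep_subset _ _) ?_
  rw [hF.2]
  exact setDim_le_two_of_forall_mem_eq hf fun x hx ↦ hx.2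

theorem finite_facets (hP : IsPolytope3 P) : (facets P).Finite := by
  refine Set.Finite.of_finite_image (f := fun F ↦ F.extremePoints ℝ) ?_ ?_
  · refine hP.finite_vertices.powerset.subset ?_
    rintro _ ⟨F, hF, rfl⟩ v hv
    exact isVertexOf_iff_mem_extremePoints.2
      (hF.1.isExtreme.extremePoints_subset_extremePoints hv)
  · intro F hF G hG (h : F.extremePoints ℝ = G.extremePoints ℝ)
    have hull : ∀ F ∈ facets P, closure (convexHull ℝ (F.extremePoints ℝ)) = F := fun F hF ↦
      closure_convexHull_extremePoints
        (hP.isCompact.of_isClosed_subset hF.1.isClosed hF.1.subset) hF.1.convex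
    rw [← hull F hF, ← hull G hG, h]

theorem exists_isSupportingAt (hP : IsPolytope3 P) (hx : x ∉ interior P) :
    ∃ f, IsSupportingAt P x f := by
  obtain ⟨f, hf⟩ := geometric_hahn_banach_open_point hP.convex.interior isOpen_interior hx
  exact ⟨f, hP.ne_zero_of_forall_mem_interior_lt hf,
    le_on_of_forall_mem_interior_le hP.convex hP.interior_nonempty fun y hy ↦ (hf y hy).le⟩

end IsPolytope3

theorem exists_tilt {ι : Type*} (V : Finset ι) {a b : ι → ℝ} (ha : ∀ v ∈ V, a v ≤ 0)
    (hab : ∀ v ∈ V, a v = 0 → b v ≤ 0) (hb : ∃ v ∈ V, 0 < b v) :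
    ∃ t : ℝ, 0 < t ∧ (∀ v ∈ V, a v + t * b v ≤ 0) ∧ ∃ w ∈ V, a w < 0 ∧ a w + t * b w = 0 := by
  obtain ⟨v₀, hv₀, hbv₀⟩ := hb
  obtain ⟨w, hwV, hmin⟩ := (V.filter (0 < b ·)).exists_min_image (fun v ↦ -a v / b v)
    ⟨v₀, Finset.mem_filter.2 ⟨hv₀, hbv₀⟩⟩
  obtain ⟨hw, hbw⟩ := Finset.mem_filter.1 hwV
  have haw : a w < 0 := (ha w hw).lt_of_ne fun h ↦ (hab w hw h).not_gt hbw
  have ht : 0 < -a w / b w := div_pos (neg_pos.2 haw) hbw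
  refine ⟨-a w / b w, ht, fun v hv ↦ ?_, w, hw, haw, by field_simp; ring⟩
  rcases lt_or_ge 0 (b v) with hbv | hbv
  · have hle := (le_div_iff₀ hbv).1 (hmin v (Finset.mem_filter.2 ⟨hv, hbv⟩))
    linarith
  · have := mul_nonpos_of_nonneg_of_nonpos ht.le hbv
    linarith [ha v hv]

theorem forall_mem_convexHull_le {V : Finset E3} {f : E3 →L[ℝ] ℝ} {c : ℝ}
    (h : ∀ v ∈ V, f v ≤ c) : ∀ y ∈ convexHull ℝ (V : Set E3), f y ≤ c :=
  convexHull_min (fun v hv ↦ h v hv) (convex_halfSpace_le (f : E3 →ₗ[ℝ] ℝ).isLinear c)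

theorem forall_mem_convexHull_eq {V : Finset E3} {f : E3 →L[ℝ] ℝ} {c : ℝ}
    (h : ∀ v ∈ V, f v = c) : ∀ y ∈ convexHull ℝ (V : Set E3), f y = c :=
  convexHull_min (fun v hv ↦ h v hv) (convex_hyperplane (f : E3 →ₗ[ℝ] ℝ).isLinear c)

namespace IsPolytope3

variable {P : Set E3} {V : Finset E3} {x : E3} {f : E3 →L[ℝ] ℝ}

theorem exists_generator_ne (hP : IsPolytope3 P) (hV : P = convexHull ℝ (V : Set E3)) (hf : f ≠ 0)
    (c : ℝ) : ∃ v ∈ V, f v ≠ c := by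
  by_contra! hcon
  have hdim := setDim_le_two_of_forall_mem_eq hf (hV ▸ forall_mem_convexHull_eq hcon)
  rw [hP.setDim_eq] at hdim
  omega

theorem exists_functional_of_lt_ker (hP : IsPolytope3 P) (hV : P = convexHull ℝ (V : Set E3))
    {W : Submodule ℝ E3} (hW : W < LinearMap.ker (f : E3 →ₗ[ℝ] ℝ)) (x : E3) :
    ∃ (g : E3 →L[ℝ] ℝ) (u : E3), f u = 0 ∧ g u ≠ 0 ∧
      W ≤ LinearMap.ker (g : E3 →ₗ[ℝ] ℝ) ∧ ∃ v ∈ V, g x < g v := by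
  obtain ⟨u, huf, huW⟩ := SetLike.exists_of_lt hW
  obtain ⟨g, hgu, hgW⟩ := Submodule.exists_le_ker_of_notMem huW
  let g' : E3 →L[ℝ] ℝ := LinearMap.toContinuousLinearMap g
  have hg' : g' ≠ 0 := fun h ↦ hgu (congrArg (· u) h)
  obtain ⟨v, hv, hne⟩ := hP.exists_generator_ne hV hg' (g' x)
  rcases hne.lt_or_gt with hlt | hgt
  · exact ⟨-g', u, huf, neg_ne_zero.2 hgu, fun y hy ↦ neg_eq_zero.2 (hgW hy), v, hv,
      neg_lt_neg hlt⟩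
  · exact ⟨g', u, huf, hgu, hgW, v, hv, hgt⟩

theorem exists_isSupportingAt_filter_ssubset (hP : IsPolytope3 P)
    (hV : P = convexHull ℝ (V : Set E3)) (hx : x ∈ P) (hf : IsSupportingAt P x f)
    (hdim : setDim {y ∈ P | f y = f x} ≠ 2) :
    ∃ f', IsSupportingAt P x f' ∧ V.filter (f · = f x) ⊂ V.filter (f' · = f' x) := by
  have hVP : ∀ v ∈ V, v ∈ P := fun v hv ↦ hV ▸ subset_convexHull ℝ _ hv
  have hlt : vectorSpan ℝ {y ∈ P | f y = f x} < LinearMap.ker (f : E3 →ₗ[ℝ] ℝ) := by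
    refine (vectorSpan_le_ker_of_forall_mem_eq fun y hy ↦ hy.2).lt_of_ne fun h ↦ hdim ?_
    rw [setDim, h, finrank_ker_eq_two hf.ne_zero]
  obtain ⟨g, u, hfu, hgu, hgker, hgpos⟩ := hP.exists_functional_of_lt_ker hV hlt x
  have hgcontact : ∀ v ∈ V, f v = f x → g v = g x := fun v hv hfv ↦
    eq_of_vectorSpan_le_ker hgker ⟨hVP v hv, hfv⟩ ⟨hx, rfl⟩
  obtain ⟨t, ht, hle, w, hwV, hfw, hw⟩ := exists_tilt V (a := fun v ↦ f v - f x)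
    (b := fun v ↦ g v - g x) (fun v hv ↦ sub_nonpos.2 (hf.le v (hVP v hv)))
    (fun v hv h ↦ (sub_eq_zero.2 (hgcontact v hv (sub_eq_zero.1 h))).le)
    (hgpos.imp fun v hv ↦ ⟨hv.1, sub_pos.2 hv.2⟩)
  have htilt : ∀ y, (f + t • g) y = f y + t * g y := fun y ↦ rfl
  refine ⟨f + t • g, ⟨fun h ↦ ?_, ?_⟩, (Finset.ssubset_iff_of_subset ?_).2 ⟨w, ?_, ?_⟩⟩
  · have hu := htilt u
    rw [h, hfu, zero_add] at hu
    exact mul_ne_zero ht.ne' hgu hu.symm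
  · rw [hV]
    exact forall_mem_convexHull_le fun v hv ↦ by rw [htilt, htilt]; linarith [hle v hv]
  · intro v hv
    obtain ⟨hv, hfv⟩ := Finset.mem_filter.1 hv
    exact Finset.mem_filter.2 ⟨hv, by rw [htilt, htilt, hfv, hgcontact v hv hfv]⟩
  · exact Finset.mem_filter.2 ⟨hwV, by rw [htilt, htilt]; linarith⟩
  · exact fun h ↦ hfw.ne (sub_eq_zero.2 (Finset.mem_filter.1 h).2)

/-- A supporting functional with the most contact vertices exposes a facet. -/
theorem exists_facet_mem_of_mem_frontier (hP : IsPolytope3 P) (hx : x ∈ frontier P) :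
    ∃ F ∈ facets P, x ∈ F := by
  obtain ⟨V, hV⟩ := hP.isPolytope
  have hxP : x ∈ P := hP.isCompact.isClosed.frontier_subset hx
  let contact : (E3 →L[ℝ] ℝ) → Finset E3 := fun f ↦ V.filter (f · = f x)
  have hfin : (contact '' {f | IsSupportingAt P x f}).Finite := by
    refine V.powerset.finite_toSet.subset ?_
    rintro _ ⟨f, -, rfl⟩
    exact Finset.mem_powerset.2 (Finset.filter_subset _ _)
  obtain ⟨f, hf, hmax⟩ := Set.Finite.exists_maximalFor' contact _ hfin
    (hP.exists_isSupportingAt hx.2)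
  refine ⟨{y ∈ P | f y = f x}, ⟨hP.isFaceOf_setOf_eq hf.le ⟨x, hxP, rfl⟩, ?_⟩, hxP, rfl⟩
  by_contra hdim
  obtain ⟨f', hf', hlt⟩ := hP.exists_isSupportingAt_filter_ssubset hV hxP hf hdim
  exact hlt.not_subset (hmax hf' hlt.subset)

end IsPolytope3

/-- A choice of functional for the facet inequality of `F`; junk unless `F` is a facet of `P`. -/
def facetNormal (P F : Set E3) : E3 →L[ℝ] ℝ :=
  (Classical.epsilon fun fc : (E3 →L[ℝ] ℝ) × ℝ ↦ IsFacetInequality P F fc.1 fc.2).1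

/-- The right-hand side of the facet inequality whose left-hand side is `facetNormal P F`. -/
def facetLevel (P F : Set E3) : ℝ :=
  (Classical.epsilon fun fc : (E3 →L[ℝ] ℝ) × ℝ ↦ IsFacetInequality P F fc.1 fc.2).2

/-- The facets of `P` containing the point `x`, that is, the facet inequalities active at `x`. -/
def facetsAt (P : Set E3) (x : E3) : Set (Set E3) := {F | IsFacetOf F P ∧ x ∈ F}

namespace IsPolytope3

variable {P F : Set E3} {x y u v : E3}

theorem isFacetInequality (hP : IsPolytope3 P) (hF : IsFacetOf F P) :
    IsFacetInequality P F (facetNormal P F) (facetLevel P F) :=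
  Classical.epsilon_spec (hP.exists_isFacetInequality hF)

theorem mem_facet_iff (hP : IsPolytope3 P) (hF : IsFacetOf F P) :
    x ∈ F ↔ x ∈ P ∧ facetNormal P F x = facetLevel P F := by
  conv_lhs => rw [(hP.isFacetInequality hF).eq_setOf]
  rfl

theorem facetNormal_le (hP : IsPolytope3 P) (hF : IsFacetOf F P) (hx : x ∈ P) :
    facetNormal P F x ≤ facetLevel P F :=
  (hP.isFacetInequality hF).le x hx

theorem facetNormal_eq (hP : IsPolytope3 P) (hF : IsFacetOf F P) (hx : x ∈ F) :
    facetNormal P F x = facetLevel P F :=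
  ((hP.mem_facet_iff hF).1 hx).2

theorem facetNormal_lt (hP : IsPolytope3 P) (hF : IsFacetOf F P) (hx : x ∈ P) (hxF : x ∉ F) :
    facetNormal P F x < facetLevel P F :=
  (hP.facetNormal_le hF hx).lt_of_ne fun h ↦ hxF ((hP.mem_facet_iff hF).2 ⟨hx, h⟩)

theorem facetNormal_ne_zero (hP : IsPolytope3 P) (hF : IsFacetOf F P) : facetNormal P F ≠ 0 := by
  obtain ⟨x, hx⟩ := hF.1.nonempty
  refine hP.ne_zero_of_forall_mem_interior_lt (x := x) ?_
  rw [hP.facetNormal_eq hF hx]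
  exact (hP.isFacetInequality hF).lt

theorem facetNormal_sub_eq_zero (hP : IsPolytope3 P) (hF : IsFacetOf F P) (hx : x ∈ F)
    (hy : y ∈ F) : facetNormal P F (x - y) = 0 := by
  rw [map_sub, hP.facetNormal_eq hF hx, hP.facetNormal_eq hF hy, sub_self]

theorem finite_facetsAt (hP : IsPolytope3 P) (x : E3) : (facetsAt P x).Finite :=
  hP.finite_facets.subset fun _ hF ↦ hF.1

theorem add_smul_mem_facet (hP : IsPolytope3 P) (hF : F ∈ facetsAt P x)
    (hu : facetNormal P F u = 0) {t : ℝ} (h : x + t • u ∈ P) : x + t • u ∈ F := by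
  rw [hP.mem_facet_iff hF.1, map_add, map_smul, hu, smul_zero, add_zero]
  exact ⟨h, hP.facetNormal_eq hF.1 hF.2⟩

/-- A polytope is the intersection of the half-spaces of its facets: the last point of `P` on a ray
from an interior point towards `x` lies in a facet, whose inequality `x` would violate. -/
theorem mem_of_forall_facetNormal_le (hP : IsPolytope3 P)
    (hx : ∀ F, IsFacetOf F P → facetNormal P F x ≤ facetLevel P F) : x ∈ P := by
  by_contra hxP
  obtain ⟨p, hp⟩ := hP.interior_nonempty
  have hpP := interior_subset hp
  have hu : x - p ≠ 0 := sub_ne_zero.2 fun h ↦ hxP (h ▸ hpP)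
  obtain ⟨T, hT, hmem, hmax⟩ := exists_max_add_smul_mem hP.isCompact hpP hu
  have hexit : p + T • (x - p) ∈ frontier P := by
    refine ⟨subset_closure hmem, fun hint ↦ ?_⟩
    obtain ⟨ε, hε, h⟩ := exists_add_smul_mem_of_mem_interior hint (x - p)
    rw [add_assoc, ← add_smul] at h
    linarith [hmax _ h]
  obtain ⟨F, hF, hTF⟩ := hP.exists_facet_mem_of_mem_frontier hexit
  have hT1 : T < 1 := by
    by_contra! h1
    have := hP.convex.add_smul_mem hpP hmem ⟨by positivity, inv_le_one_of_one_le₀ h1⟩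
    rw [smul_smul, inv_mul_cancel₀ (by positivity), one_smul, add_sub_cancel] at this
    exact hxP this
  have hTeq := hP.facetNormal_eq hF hTF
  have hplt := (hP.isFacetInequality hF).lt p hp
  rw [map_add, map_smul, map_sub, smul_eq_mul] at hTeq
  nlinarith [hx F hF]

theorem exists_add_smul_mem (hP : IsPolytope3 P) (hx : x ∈ P)
    (hu : ∀ F ∈ facetsAt P x, facetNormal P F u ≤ 0) : ∃ ε : ℝ, 0 < ε ∧ x + ε • u ∈ P := by
  have hsat : ∀ F ∈ facets P,
      ∀ᶠ t in nhdsWithin (0 : ℝ) (Ioi 0), facetNormal P F (x + t • u) ≤ facetLevel P F := by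
    intro F hF
    by_cases hxF : x ∈ F
    · filter_upwards [self_mem_nhdsWithin] with t (ht : 0 < t)
      rw [map_add, map_smul, smul_eq_mul, hP.facetNormal_eq hF hxF]
      linarith [mul_nonpos_of_nonneg_of_nonpos ht.le (hu F ⟨hF, hxF⟩)]
    · have hcont : Continuous fun t : ℝ ↦ facetNormal P F (x + t • u) := by fun_prop
      have hlt : ∀ᶠ t in nhds (0 : ℝ), facetNormal P F (x + t • u) < facetLevel P F :=
        hcont.continuousAt.eventually_lt continuousAt_const
          (by simpa using hP.facetNormal_lt hF hx hxF)
      exact (hlt.filter_mono nhdsWithin_le_nhds).mono fun t ht ↦ ht.le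
  obtain ⟨ε, h, hε⟩ :=
    (((Set.Finite.eventually_all hP.finite_facets).2 hsat).and self_mem_nhdsWithin).exists
  exact ⟨ε, hε, hP.mem_of_forall_facetNormal_le h⟩

theorem exists_exit_facet (hP : IsPolytope3 P) (hx : x ∈ P) (hu : u ≠ 0)
    (hin : ∀ F ∈ facetsAt P x, facetNormal P F u ≤ 0) :
    ∃ T : ℝ, 0 < T ∧ x + T • u ∈ P ∧ ∃ K ∈ facetsAt P (x + T • u), 0 < facetNormal P K u := by
  obtain ⟨ε, hε, hεP⟩ := hP.exists_add_smul_mem hx hin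
  obtain ⟨T, -, hmem, hmax⟩ := exists_max_add_smul_mem hP.isCompact hx hu
  refine ⟨T, hε.trans_le (hmax ε hεP), hmem, ?_⟩
  by_contra! hcon
  obtain ⟨δ, hδ, h⟩ := hP.exists_add_smul_mem hmem hcon
  rw [add_assoc, ← add_smul] at h
  linarith [hmax _ h]

theorem eq_zero_of_forall_facetNormal_eq_zero (hP : IsPolytope3 P) (hv : IsVertexOf v P)
    (hu : ∀ F ∈ facetsAt P v, facetNormal P F u = 0) : u = 0 := by
  obtain ⟨δ, hδ, hδP⟩ := hP.exists_add_smul_mem hv.mem fun F hF ↦ (hu F hF).le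
  obtain ⟨ε, hε, hεP⟩ := hP.exists_add_smul_mem (u := v - (v + δ • u)) hv.mem fun F hF ↦ by
    simp [hu F hF]
  have h := mem_singleton_iff.1 <|
    mem_of_isExtreme_of_add_smul_sub_mem hv.isExtreme (mem_singleton v) hδP hε hεP
  exact (smul_eq_zero.1 (add_eq_left.1 h)).resolve_left hδ.ne'

theorem eq_of_facetsAt_subset (hP : IsPolytope3 P) (hv : IsVertexOf v P)
    (h : facetsAt P v ⊆ facetsAt P x) : x = v :=
  sub_eq_zero.1 <| hP.eq_zero_of_forall_facetNormal_eq_zero hv fun _ hF ↦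
    hP.facetNormal_sub_eq_zero hF.1 (h hF).2 hF.2

theorem exists_vertex_facetsAt_subset (hP : IsPolytope3 P) (hx : x ∈ P) :
    ∃ v, IsVertexOf v P ∧ facetsAt P x ⊆ facetsAt P v := by
  let Q : Set E3 := P ∩ ⋂ F ∈ facetsAt P x, F
  have hQ : IsCompact Q :=
    hP.isCompact.inter_right (isClosed_biInter fun F hF ↦ hF.1.1.isClosed)
  have hQP : IsExtreme ℝ P Q := by
    refine ⟨inter_subset_left, fun a ha b hb z hz hzab ↦ ⟨ha, mem_iInter₂.2 fun F hF ↦ ?_⟩⟩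
    exact hF.1.1.isExtreme.left_mem_of_mem_openSegment ha hb (mem_iInter₂.1 hz.2 F hF) hzab
  obtain ⟨v, hv⟩ := hQ.extremePoints_nonempty ⟨x, hx, mem_iInter₂.2 fun F hF ↦ hF.2⟩
  refine ⟨v, isVertexOf_iff_mem_extremePoints.2 (hQP.extremePoints_subset_extremePoints hv), ?_⟩
  exact fun F hF ↦ ⟨hF.1, mem_iInter₂.1 hv.1.2 F hF⟩

/-- A short segment through `x` in a direction of the kernel stays in `P`, hence, by extremality, in
`A`. -/
theorem facetNormal_ker_le_vectorSpan (hP : IsPolytope3 P) {A : Set E3} (hA : IsFaceOf A P)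
    (hx : x ∈ A) (hF : facetsAt P x = {F}) :
    LinearMap.ker (facetNormal P F : E3 →ₗ[ℝ] ℝ) ≤ vectorSpan ℝ A := by
  intro u (hu : facetNormal P F u = 0)
  have hxP := hA.subset hx
  obtain ⟨δ, hδ, hδP⟩ := hP.exists_add_smul_mem (u := u) hxP fun K hK ↦ by
    rw [hF, mem_singleton_iff] at hK
    rw [hK, hu]
  obtain ⟨ε, hε, hεP⟩ := hP.exists_add_smul_mem (u := x - (x + δ • u)) hxP fun K hK ↦ by
    rw [hF, mem_singleton_iff] at hK
    simp [hK, hu]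
  have h := vsub_mem_vectorSpan ℝ
    (mem_of_isExtreme_of_add_smul_sub_mem hA.isExtreme hx hδP hε hεP) hx
  rw [vsub_eq_sub, add_sub_cancel_left] at h
  exact (Submodule.smul_mem_iff _ hδ.ne').1 h

theorem facet_subset_frontier (hP : IsPolytope3 P) (hF : IsFacetOf F P) : F ⊆ frontier P :=
  fun _ hx ↦ ⟨subset_closure (hF.1.subset hx), fun hint ↦
    Set.disjoint_left.1 (hP.disjoint_interior hF) hint hx⟩

end IsPolytope3

theorem IsFacetOf.facetsAt_of_mem_intrinsicInterior {P F : Set E3} {x : E3} (hF : IsFacetOf F P)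
    (hx : x ∈ intrinsicInterior ℝ F) : facetsAt P x = {F} := by
  refine Subset.antisymm ?_ (singleton_subset_iff.2 ⟨hF, intrinsicInterior_subset hx⟩)
  rintro K ⟨hK, hxK⟩
  exact (hF.eq_of_subset hK (hK.1.subset_of_mem_intrinsicInterior hF.1.subset hx hxK)).symm

/-! ### Simple 3-polytopes -/

namespace IsSimplePolytope3

variable {P F G X : Set E3} {u v w x y : E3}

theorem isPolytope3 (hP : IsSimplePolytope3 P) : IsPolytope3 P := ⟨hP.1, hP.2.1⟩

theorem ncard_facetsAt (hP : IsSimplePolytope3 P) (hv : IsVertexOf v P) :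
    (facetsAt P v).ncard = 3 :=
  hP.2.2 v hv

theorem ncard_facetsAt_le (hP : IsSimplePolytope3 P) (hx : x ∈ P) : (facetsAt P x).ncard ≤ 3 := by
  obtain ⟨v, hv, hsub⟩ := hP.isPolytope3.exists_vertex_facetsAt_subset hx
  exact (ncard_le_ncard hsub (hP.isPolytope3.finite_facetsAt v)).trans (hP.ncard_facetsAt hv).le

theorem isVertexOf_of_three_le_ncard (hP : IsSimplePolytope3 P) (hx : x ∈ P)
    (h : 3 ≤ (facetsAt P x).ncard) : IsVertexOf x P := by
  obtain ⟨v, hv, hsub⟩ := hP.isPolytope3.exists_vertex_facetsAt_subset hx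
  have heq := eq_of_subset_of_ncard_le hsub (by rwa [hP.ncard_facetsAt hv])
    (hP.isPolytope3.finite_facetsAt v)
  rwa [hP.isPolytope3.eq_of_facetsAt_subset hv heq.ge]

theorem exists_forall_facetNormal_eq (hP : IsSimplePolytope3 P) (hv : IsVertexOf v P)
    (a : Set E3 → ℝ) : ∃ u, ∀ F ∈ facetsAt P v, facetNormal P F u = a F := by
  let φ : E3 →ₗ[ℝ] (facetsAt P v → ℝ) :=
    LinearMap.pi fun F ↦ (facetNormal P F.1 : E3 →ₗ[ℝ] ℝ)
  have hφ : Function.Injective φ := by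
    refine (injective_iff_map_eq_zero φ).2 fun u hu ↦ ?_
    exact hP.isPolytope3.eq_zero_of_forall_facetNormal_eq_zero hv fun F hF ↦ congrFun hu ⟨F, hF⟩
  have := (hP.isPolytope3.finite_facetsAt v).fintype
  have hdim : Module.finrank ℝ E3 = Module.finrank ℝ (facetsAt P v → ℝ) := by
    rw [Module.finrank_fintype_fun_eq_card, finrank_euclideanSpace_fin, ← Nat.card_eq_fintype_card,
      Nat.card_coe_set_eq, hP.ncard_facetsAt hv]
  obtain ⟨u, hu⟩ := (LinearMap.injective_iff_surjective_of_finrank_eq_finrank hdim).1 hφ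
    fun F ↦ a F.1
  exact ⟨u, fun F hF ↦ congrFun hu ⟨F, hF⟩⟩

end IsSimplePolytope3

/-- `u` points from the vertex `v` along the edge that leaves the facet `X` and stays in the other
facets at `v`. -/
def IsEdgeDirection (P : Set E3) (v : E3) (X : Set E3) (u : E3) : Prop :=
  facetNormal P X u = -1 ∧ ∀ F ∈ facetsAt P v, F ≠ X → facetNormal P F u = 0

namespace IsSimplePolytope3

variable {P F G X : Set E3} {u v w x y : E3}

theorem exists_isEdgeDirection (hP : IsSimplePolytope3 P) (hv : IsVertexOf v P)
    (hX : X ∈ facetsAt P v) : ∃ u, IsEdgeDirection P v X u := by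
  classical
  obtain ⟨u, hu⟩ := hP.exists_forall_facetNormal_eq hv fun F ↦ if F = X then -1 else 0
  exact ⟨u, by simpa using hu X hX, fun F hF hFX ↦ by simpa [hFX] using hu F hF⟩

theorem sub_eq_sum_smul (hP : IsSimplePolytope3 P) (hv : IsVertexOf v P) {d : Set E3 → E3}
    (hd : ∀ X ∈ facetsAt P v, IsEdgeDirection P v X (d X)) (y : E3) :
    y - v = ∑ X ∈ (hP.isPolytope3.finite_facetsAt v).toFinset,
      (facetLevel P X - facetNormal P X y) • d X := by
  rw [← sub_eq_zero]
  refine hP.isPolytope3.eq_zero_of_forall_facetNormal_eq_zero hv fun F hF ↦ ?_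
  rw [map_sub, map_sum, Finset.sum_eq_single F]
  · rw [map_smul, (hd F hF).1, map_sub, hP.isPolytope3.facetNormal_eq hF.1 hF.2, smul_eq_mul]
    ring
  · intro X hX hXF
    rw [map_smul, (hd X ((Finite.mem_toFinset _).1 hX)).2 F hF hXF.symm, smul_zero]
  · exact fun h ↦ absurd ((Finite.mem_toFinset _).2 hF) h

theorem exists_adjacent_vertex (hP : IsSimplePolytope3 P) (hv : IsVertexOf v P)
    (hX : X ∈ facetsAt P v) (hu : IsEdgeDirection P v X u) :
    ∃ T : ℝ, 0 < T ∧ IsVertexOf (v + T • u) P ∧ ∃ Y ∉ facetsAt P v, 0 < facetNormal P Y u ∧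
      facetsAt P (v + T • u) = insert Y (facetsAt P v \ {X}) := by
  have hP3 := hP.isPolytope3
  have hle : ∀ F ∈ facetsAt P v, facetNormal P F u ≤ 0 := by
    intro F hF
    obtain rfl | hFX := eq_or_ne F X
    · rw [hu.1]
      norm_num
    · exact (hu.2 F hF hFX).le
  have hu0 : u ≠ 0 := by
    rintro rfl
    simpa using hu.1
  obtain ⟨T, hT, hTP, Y, hY, hYu⟩ := hP3.exists_exit_facet hv.mem hu0 hle
  have hYv : Y ∉ facetsAt P v := fun h ↦ (hle Y h).not_gt hYu
  have hsub : insert Y (facetsAt P v \ {X}) ⊆ facetsAt P (v + T • u) :=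
    insert_subset hY fun F hF ↦ ⟨hF.1.1, hP3.add_smul_mem_facet hF.1 (hu.2 F hF.1 hF.2) hTP⟩
  have hcard : (insert Y (facetsAt P v \ {X})).ncard = 3 := by
    rw [ncard_insert_of_notMem (fun h ↦ hYv h.1) ((hP3.finite_facetsAt v).sdiff),
      ncard_sdiff_singleton_of_mem hX, hP.ncard_facetsAt hv]
  have heq : insert Y (facetsAt P v \ {X}) = facetsAt P (v + T • u) :=
    eq_of_subset_of_ncard_le hsub ((hP.ncard_facetsAt_le hTP).trans hcard.ge)
      (hP3.finite_facetsAt _)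
  exact ⟨T, hT, hP.isVertexOf_of_three_le_ncard hTP (heq ▸ hcard.ge), Y, hYv, hYu, heq.symm⟩

/-- The simplex method: an edge at `v` improves `l`, because `y - v` is a nonnegative combination
of the edge directions at `v`. -/
theorem exists_vertex_lt_of_lt (hP : IsSimplePolytope3 P) (hv : IsVertexOf v P) (hy : y ∈ P)
    {l : E3 →L[ℝ] ℝ} (hl : l v < l y) :
    ∃ X ∈ facetsAt P v, y ∉ X ∧
      ∃ v', IsVertexOf v' P ∧ facetsAt P v \ {X} ⊆ facetsAt P v' ∧ l v < l v' := by
  have hP3 := hP.isPolytope3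
  choose! d hd using fun X (hX : X ∈ facetsAt P v) ↦ hP.exists_isEdgeDirection hv hX
  obtain ⟨X, hXv, hpos⟩ : ∃ X ∈ facetsAt P v,
      0 < (facetLevel P X - facetNormal P X y) * l (d X) := by
    have hsum := congrArg l (hP.sub_eq_sum_smul hv hd y)
    simp only [map_sub, map_sum, map_smul, smul_eq_mul] at hsum
    by_contra! hcon
    rw [← sub_pos, hsum] at hl
    exact hl.not_ge (Finset.sum_nonpos fun X hX ↦ hcon X ((Finite.mem_toFinset _).1 hX))
  have hslack : 0 ≤ facetLevel P X - facetNormal P X y := sub_nonneg.2 (hP3.facetNormal_le hXv.1 hy)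
  have hlX : 0 < l (d X) := pos_of_mul_pos_right hpos hslack
  obtain ⟨T, hT, hvT, Y, -, -, hact⟩ := hP.exists_adjacent_vertex hv hXv (hd X hXv)
  refine ⟨X, hXv, fun hyX ↦ ?_, _, hvT, hact ▸ subset_insert _ _, ?_⟩
  · rw [hP3.facetNormal_eq hXv.1 hyX, sub_self, zero_mul] at hpos
    exact hpos.false
  · rw [map_add, map_smul, smul_eq_mul, lt_add_iff_pos_right]
    exact mul_pos hT hlX

theorem exists_forall_vertex_lt (hP : IsSimplePolytope3 P) (hw : IsVertexOf w P) :
    ∃ l : E3 →L[ℝ] ℝ, ∀ v, IsVertexOf v P → v ≠ w → l v < l w := by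
  have hP3 := hP.isPolytope3
  refine ⟨∑ F ∈ (hP3.finite_facetsAt w).toFinset, facetNormal P F, fun v hv hvw ↦ ?_⟩
  obtain ⟨F, hFw, hFv⟩ : ∃ F ∈ facetsAt P w, F ∉ facetsAt P v :=
    not_subset.1 fun h ↦ hvw (hP3.eq_of_facetsAt_subset hw h)
  simp only [FunLike.coe_sum, Finset.sum_apply]
  refine Finset.sum_lt_sum (fun G hG ↦ ?_) ⟨F, (Finite.mem_toFinset _).2 hFw, ?_⟩
  · have hGw := (Finite.mem_toFinset _).1 hG
    exact (hP3.facetNormal_le hGw.1 hv.mem).trans_eq (hP3.facetNormal_eq hGw.1 hGw.2).symm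
  · exact (hP3.facetNormal_lt hFw.1 hv.mem fun h ↦ hFv ⟨hFw.1, h⟩).trans_eq
      (hP3.facetNormal_eq hFw.1 hFw.2).symm

/-- Every vertex `v` is joined to `w` by a path of edges that never leaves a facet through `w`. -/
theorem vertex_induction (hP : IsSimplePolytope3 P) {p : E3 → Prop} (hw : IsVertexOf w P)
    (hv : IsVertexOf v P) (hpv : p v)
    (step : ∀ v v' X, IsVertexOf v P → IsVertexOf v' P → p v → X ∈ facetsAt P v → w ∉ X →
      facetsAt P v \ {X} ⊆ facetsAt P v' → p v') : p w := by
  obtain ⟨l, hl⟩ := hP.exists_forall_vertex_lt hw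
  have hfin : {x | IsVertexOf x P ∧ p x}.Finite :=
    hP.isPolytope3.finite_vertices.subset fun _ h ↦ h.1
  obtain ⟨x, ⟨hx, hpx⟩, hmax⟩ := exists_max_image _ l hfin ⟨v, hv, hpv⟩
  by_cases hxw : x = w
  · exact hxw ▸ hpx
  obtain ⟨X, hX, hwX, x', hx', hsub, hlt⟩ := hP.exists_vertex_lt_of_lt hx hw.mem (hl x hx hxw)
  exact absurd (hmax x' ⟨hx', step x x' X hx hx' hpx hX hwX hsub⟩) hlt.not_ge

end IsSimplePolytope3

/-- The facets of `P` adjacent to `F`; in a simple polytope two distinct facets that meet share an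
edge. -/
def adjacentFacets (P F : Set E3) : Set (Set E3) := {G | IsFacetOf G P ∧ F ≠ G ∧ (F ∩ G).Nonempty}

theorem mem_adjacentFacets_symm {P F G : Set E3} (hF : IsFacetOf F P)
    (hG : G ∈ adjacentFacets P F) : F ∈ adjacentFacets P G :=
  ⟨hF, hG.2.1.symm, inter_comm F G ▸ hG.2.2⟩

/-- `F`, `G`, `H` are three distinct facets of `P` with a common point; in a simple polytope this is
the same thing as a vertex with an ordering of its facets. -/
structure MeetAtVertex (P F G H : Set E3) : Prop where
  facet₁ : IsFacetOf F P
  facet₂ : IsFacetOf G P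
  facet₃ : IsFacetOf H P
  ne₁₂ : F ≠ G
  ne₁₃ : F ≠ H
  ne₂₃ : G ≠ H
  nonempty : (F ∩ G ∩ H).Nonempty

namespace MeetAtVertex

variable {P F G H K X : Set E3} {x y : E3}

theorem swap (h : MeetAtVertex P F G H) : MeetAtVertex P F H G :=
  ⟨h.facet₁, h.facet₃, h.facet₂, h.ne₁₃, h.ne₁₂, h.ne₂₃.symm, inter_right_comm F G H ▸ h.nonempty⟩

theorem rotate (h : MeetAtVertex P F G H) : MeetAtVertex P G H F :=
  ⟨h.facet₂, h.facet₃, h.facet₁, h.ne₂₃, h.ne₁₂.symm, h.ne₁₃.symm,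
    by rw [inter_comm, ← inter_assoc]; exact h.nonempty⟩

theorem swap_left (h : MeetAtVertex P F G H) : MeetAtVertex P G F H := h.rotate.swap

theorem mem_adjacentFacets (h : MeetAtVertex P F G H) : G ∈ adjacentFacets P F :=
  ⟨h.facet₂, h.ne₁₂, h.nonempty.mono inter_subset_left⟩

theorem insert_subset_facetsAt (h : MeetAtVertex P F G H) (hx : x ∈ F ∩ G ∩ H) :
    {F, G, H} ⊆ facetsAt P x :=
  insert_subset ⟨h.facet₁, hx.1.1⟩ <|
    insert_subset ⟨h.facet₂, hx.1.2⟩ <| singleton_subset_iff.2 ⟨h.facet₃, hx.2⟩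

theorem ncard_triple (h : MeetAtVertex P F G H) : ({F, G, H} : Set (Set E3)).ncard = 3 :=
  ncard_eq_three.2 ⟨F, G, H, h.ne₁₂, h.ne₁₃, h.ne₂₃, rfl⟩

theorem facetsAt_eq (hP : IsSimplePolytope3 P) (h : MeetAtVertex P F G H) (hx : x ∈ F ∩ G ∩ H) :
    facetsAt P x = {F, G, H} :=
  (eq_of_subset_of_ncard_le (h.insert_subset_facetsAt hx)
    ((hP.ncard_facetsAt_le (h.facet₁.1.subset hx.1.1)).trans h.ncard_triple.ge)
    (hP.isPolytope3.finite_facetsAt x)).symm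

theorem isVertexOf (hP : IsSimplePolytope3 P) (h : MeetAtVertex P F G H) (hx : x ∈ F ∩ G ∩ H) :
    IsVertexOf x P :=
  hP.isVertexOf_of_three_le_ncard (h.facet₁.1.subset hx.1.1)
    (by rw [h.facetsAt_eq hP hx, h.ncard_triple])

theorem point_unique (hP : IsSimplePolytope3 P) (h : MeetAtVertex P F G H) (hx : x ∈ F ∩ G ∩ H)
    (hy : y ∈ F ∩ G ∩ H) : x = y :=
  hP.isPolytope3.eq_of_facetsAt_subset (h.isVertexOf hP hy)
    (h.facetsAt_eq hP hx ▸ h.facetsAt_eq hP hy).subset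

theorem eq_add_smul_of_mem_inter (hP : IsSimplePolytope3 P) (h : MeetAtVertex P F G H)
    (hx : x ∈ F ∩ G ∩ H) {u z : E3} (hu : IsEdgeDirection P x H u) (hz : z ∈ F ∩ G) :
    z = x + (facetLevel P H - facetNormal P H z) • u := by
  have hP3 := hP.isPolytope3
  refine sub_eq_zero.1 <|
    hP3.eq_zero_of_forall_facetNormal_eq_zero (h.isVertexOf hP hx) fun X hX ↦ ?_
  rw [h.facetsAt_eq hP hx] at hX
  rw [← sub_sub, map_sub, map_smul]
  obtain rfl | rfl | rfl := hX
  · rw [hP3.facetNormal_sub_eq_zero h.facet₁ hz.1 hx.1.1, hu.2 X ⟨h.facet₁, hx.1.1⟩ h.ne₁₃,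
      smul_zero, sub_zero]
  · rw [hP3.facetNormal_sub_eq_zero h.facet₂ hz.2 hx.1.2, hu.2 X ⟨h.facet₂, hx.1.2⟩ h.ne₂₃,
      smul_zero, sub_zero]
  · rw [map_sub, hP3.facetNormal_eq h.facet₃ hx.2, hu.1, smul_eq_mul]
    ring

/-- The second endpoint of the edge `F ∩ G` is where the ray from `x` away from `H` leaves `P`. -/
theorem exists_inter_eq_segment (hP : IsSimplePolytope3 P) (h : MeetAtVertex P F G H)
    (hx : x ∈ F ∩ G ∩ H) : ∃ K y, H ≠ K ∧ MeetAtVertex P F G K ∧ y ∈ F ∩ G ∩ K ∧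
      F ∩ G = segment ℝ x y := by
  have hP3 := hP.isPolytope3
  have hxv := h.isVertexOf hP hx
  have hxFGH := h.facetsAt_eq hP hx
  have hHx : H ∈ facetsAt P x := ⟨h.facet₃, hx.2⟩
  obtain ⟨u, hu⟩ := hP.exists_isEdgeDirection hxv hHx
  obtain ⟨T, hT, -, K, hKx, hKu, hyact⟩ := hP.exists_adjacent_vertex hxv hHx hu
  rw [hxFGH] at hKx hyact
  simp only [mem_insert_iff, mem_singleton_iff, not_or] at hKx
  have hyF : F ∈ facetsAt P (x + T • u) := by simp [hyact, h.ne₁₃]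
  have hyG : G ∈ facetsAt P (x + T • u) := by simp [hyact, h.ne₂₃]
  have hyK : K ∈ facetsAt P (x + T • u) := by simp [hyact]
  have hyFGK : x + T • u ∈ F ∩ G ∩ K := ⟨⟨hyF.2, hyG.2⟩, hyK.2⟩
  refine ⟨K, x + T • u, Ne.symm hKx.2.2, ⟨h.facet₁, h.facet₂, hyK.1, h.ne₁₂, Ne.symm hKx.1,
    Ne.symm hKx.2.1, _, hyFGK⟩, hyFGK, Subset.antisymm (fun z hz ↦ ?_) <|
      (h.facet₁.1.convex.inter h.facet₂.1.convex).segment_subset hx.1 hyFGK.1⟩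
  let s := facetLevel P H - facetNormal P H z
  have hzP := h.facet₁.1.subset hz.1
  have hz_eq : z = x + s • u := h.eq_add_smul_of_mem_inter hP hx hu hz
  have hs0 : 0 ≤ s := sub_nonneg.2 (hP3.facetNormal_le h.facet₃ hzP)
  have hsT : s ≤ T := by
    have hzK := hP3.facetNormal_le hyK.1 hzP
    rw [← hP3.facetNormal_eq hyK.1 hyK.2, hz_eq, map_add, map_add, map_smul,
      map_smul, add_le_add_iff_left] at hzK
    exact le_of_mul_le_mul_right hzK hKu
  rw [segment_eq_image', hz_eq]
  refine ⟨s / T, ⟨by positivity, (div_le_one hT).2 hsT⟩, ?_⟩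
  simp only [add_sub_cancel_left, smul_smul, div_mul_cancel₀ s hT.ne']

theorem exists_ne (hP : IsSimplePolytope3 P) (h : MeetAtVertex P F G H) :
    ∃ K, H ≠ K ∧ MeetAtVertex P F G K := by
  obtain ⟨x, hx⟩ := h.nonempty
  obtain ⟨K, -, hHK, hK, -⟩ := h.exists_inter_eq_segment hP hx
  exact ⟨K, hHK, hK⟩

theorem exists_unique_ne (hP : IsSimplePolytope3 P) (h : MeetAtVertex P F G H) :
    ∃ K, ∀ X, MeetAtVertex P F G X → X = H ∨ X = K := by
  obtain ⟨x, hx⟩ := h.nonempty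
  obtain ⟨K, y, -, hK, hy, hseg⟩ := h.exists_inter_eq_segment hP hx
  refine ⟨K, fun X hX ↦ ?_⟩
  obtain ⟨z, hz⟩ := hX.nonempty
  have hzxy : z = x ∨ z = y := by
    have hzseg := hz.1
    rw [hseg, ← insert_endpoints_openSegment] at hzseg
    obtain rfl | rfl | hopen := hzseg
    · exact .inl rfl
    · exact .inr rfl
    · exact .inl (((mem_extremePoints.1 (isVertexOf_iff_mem_extremePoints.1
        (hX.isVertexOf hP hz))).2 x (h.facet₁.1.subset hx.1.1) y (h.facet₁.1.subset hy.1.1)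
          hopen).1.symm)
  have hXz : X ∈ facetsAt P z := ⟨hX.facet₃, hz.2⟩
  obtain rfl | rfl := hzxy
  · rw [h.facetsAt_eq hP hx] at hXz
    exact .inl ((hXz.resolve_left hX.ne₁₃.symm).resolve_left hX.ne₂₃.symm)
  · rw [hK.facetsAt_eq hP hy] at hXz
    exact .inr ((hXz.resolve_left hX.ne₁₃.symm).resolve_left hX.ne₂₃.symm)

theorem eq_or_eq (hP : IsSimplePolytope3 P) (h : MeetAtVertex P F G H) (hK : MeetAtVertex P F G K)
    (hHK : H ≠ K) (hX : MeetAtVertex P F G X) : X = H ∨ X = K := by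
  obtain ⟨K', hK'⟩ := h.exists_unique_ne hP
  rw [(hK' K hK).resolve_left hHK.symm]
  exact hK' X hX

theorem inter_eq_segment (hP : IsSimplePolytope3 P) (h : MeetAtVertex P F G H)
    (hK : MeetAtVertex P F G K) (hHK : H ≠ K) (hx : x ∈ F ∩ G ∩ H)
    (hy : y ∈ F ∩ G ∩ K) : F ∩ G = segment ℝ x y := by
  obtain ⟨K', y', hHK', hK', hy', hseg⟩ := h.exists_inter_eq_segment hP hx
  obtain rfl := (h.eq_or_eq hP hK hHK hK').resolve_left hHK'.symm
  rw [hseg, hK.point_unique hP hy hy']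

theorem isEdgeOf_inter (hP : IsSimplePolytope3 P) (h : MeetAtVertex P F G H) :
    IsEdgeOf (F ∩ G) P := by
  obtain ⟨x, hx⟩ := h.nonempty
  obtain ⟨K, y, hHK, hK, hy, hseg⟩ := h.exists_inter_eq_segment hP hx
  refine ⟨h.facet₁.1.inter h.facet₂.1 ⟨x, hx.1⟩, ?_⟩
  have hxy : x ≠ y := by
    rintro rfl
    have hKx : K ∈ facetsAt P x := ⟨hK.facet₃, hy.2⟩
    rw [h.facetsAt_eq hP hx] at hKx
    exact hHK.symm ((hKx.resolve_left hK.ne₁₃.symm).resolve_left hK.ne₂₃.symm)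
  rw [setDim, hseg, finrank_vectorSpan_segment hxy]

end MeetAtVertex

namespace IsSimplePolytope3

variable {P F G : Set E3} {e : Set E3} {v : E3}

theorem exists_mem_facetsAt_ne_ne (hP : IsSimplePolytope3 P) (hv : IsVertexOf v P)
    (F G : Set E3) : ∃ H ∈ facetsAt P v, F ≠ H ∧ G ≠ H := by
  obtain ⟨H, hH, hHFG⟩ : ∃ H ∈ facetsAt P v, H ∉ ({F, G} : Set (Set E3)) :=
    exists_mem_notMem_of_ncard_lt_ncard
      ((ncard_insert_le F {G}).trans_lt (by rw [ncard_singleton, hP.ncard_facetsAt hv]; norm_num))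
  simp only [mem_insert_iff, mem_singleton_iff, not_or] at hHFG
  exact ⟨H, hH, Ne.symm hHFG.1, Ne.symm hHFG.2⟩

theorem inter_eq_segment {x y : E3} (hP : IsSimplePolytope3 P) (hF : IsFacetOf F P)
    (hG : IsFacetOf G P) (hFG : F ≠ G) (hx : IsVertexOf x P) (hy : IsVertexOf y P) (hxy : x ≠ y)
    (hxFG : x ∈ F ∩ G) (hyFG : y ∈ F ∩ G) : F ∩ G = segment ℝ x y := by
  obtain ⟨H, hH, hFH, hGH⟩ := hP.exists_mem_facetsAt_ne_ne hx F G
  obtain ⟨K, hK, hFK, hGK⟩ := hP.exists_mem_facetsAt_ne_ne hy F G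
  have hmeet : MeetAtVertex P F G H := ⟨hF, hG, hH.1, hFG, hFH, hGH, x, hxFG, hH.2⟩
  refine hmeet.inter_eq_segment hP ⟨hF, hG, hK.1, hFG, hFK, hGK, y, hyFG, hK.2⟩ ?_ ⟨hxFG, hH.2⟩
    ⟨hyFG, hK.2⟩
  rintro rfl
  exact hxy (hmeet.point_unique hP ⟨hxFG, hH.2⟩ ⟨hyFG, hK.2⟩)

theorem exists_meetAtVertex (hP : IsSimplePolytope3 P) (hF : IsFacetOf F P)
    (hG : G ∈ adjacentFacets P F) : ∃ H, MeetAtVertex P F G H := by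
  obtain ⟨x, hx⟩ := hG.2.2
  obtain ⟨v, hv, hsub⟩ := hP.isPolytope3.exists_vertex_facetsAt_subset (hF.1.subset hx.1)
  obtain ⟨H, hH, hFH, hGH⟩ := hP.exists_mem_facetsAt_ne_ne hv F G
  exact ⟨H, hF, hG.1, hH.1, hG.2.1, hFH, hGH,
    v, ⟨(hsub ⟨hF, hx.1⟩).2, (hsub ⟨hG.1, hx.2⟩).2⟩, hH.2⟩

theorem isEdgeOf_inter (hP : IsSimplePolytope3 P) (hF : IsFacetOf F P)
    (hG : G ∈ adjacentFacets P F) : IsEdgeOf (F ∩ G) P := by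
  obtain ⟨H, hH⟩ := hP.exists_meetAtVertex hF hG
  exact hH.isEdgeOf_inter hP

/-- A relative interior point of an edge lies in a second facet, since otherwise the edge would
contain a neighbourhood of that point in `F`. -/
theorem exists_eq_inter_of_isEdgeOf (hP : IsSimplePolytope3 P) (hF : IsFacetOf F P)
    (he : IsEdgeOf e P) (heF : e ⊆ F) : ∃ G ∈ adjacentFacets P F, e = F ∩ G := by
  obtain ⟨x, hx⟩ := he.1.nonempty_intrinsicInterior
  have hxe := intrinsicInterior_subset hx
  obtain ⟨G, hG, hGF⟩ : ∃ G ∈ facetsAt P x, G ≠ F := by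
    by_contra! hcon
    have hxF : facetsAt P x = {F} :=
      Subset.antisymm hcon (singleton_subset_iff.2 ⟨hF, heF hxe⟩)
    have hle := Submodule.finrank_mono (hP.isPolytope3.facetNormal_ker_le_vectorSpan he.1 hxe hxF)
    rw [finrank_ker_eq_two (hP.isPolytope3.facetNormal_ne_zero hF)] at hle
    have := he.2
    unfold setDim at this
    omega
  have hGadj : G ∈ adjacentFacets P F := ⟨hG.1, hGF.symm, x, heF hxe, hG.2⟩
  have heG := hG.1.1.subset_of_mem_intrinsicInterior he.1.subset hx hG.2
  have hFG := hP.isEdgeOf_inter hF hGadj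
  exact ⟨G, hGadj, he.1.eq_of_subset_of_setDim_le (subset_inter heF heG) hFG.1.subset
    (hFG.2.trans he.2.symm).le⟩

theorem facetEdges_eq_ncard (hP : IsSimplePolytope3 P) (hF : IsFacetOf F P) :
    facetEdges P F = (adjacentFacets P F).ncard := by
  refine (ncard_congr (s := adjacentFacets P F) (fun G _ ↦ F ∩ G) (fun G hG ↦ ?_)
    (fun G G' hG hG' heq ↦ ?_) fun e he ↦ ?_).symm
  · exact ⟨hP.isEdgeOf_inter hF hG, inter_subset_left⟩
  · by_contra hne
    have hFG : (F ∩ G).Subsingleton := by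
      have hG'sub : F ∩ G ⊆ F ∩ G ∩ G' := subset_inter Subset.rfl (heq ▸ inter_subset_right)
      obtain ⟨x, hx⟩ := hG.2.2
      exact fun y hy z hz ↦ MeetAtVertex.point_unique hP
        ⟨hF, hG.1, hG'.1, hG.2.1, hG'.2.1, hne, x, hG'sub hx⟩ (hG'sub hy) (hG'sub hz)
    have hdim := (hP.isEdgeOf_inter hF hG).2
    rw [setDim, (vectorSpan_eq_bot_iff_subsingleton (k := ℝ)).2 hFG, finrank_bot] at hdim
    exact zero_ne_one hdim
  · obtain ⟨G, hG, rfl⟩ := hP.exists_eq_inter_of_isEdgeOf hF he.1 he.2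
    exact ⟨G, hG, rfl⟩

end IsSimplePolytope3

theorem exists_isHamiltonian_of_isCycles {V : Type*} [Finite V] [DecidableEq V]
    {Γ : SimpleGraph V} (hΓ : Γ.IsCycles) (hconn : Γ.Preconnected) {g h : V} (hgh : Γ.Adj g h) :
    ∃ p : Γ.Walk g h, p.IsHamiltonian := by
  obtain ⟨p, hp, hverts⟩ := hΓ.exists_cycle_toSubgraph_verts_eq_connectedComponentSupp
    (v := g) (c := Γ.connectedComponentMk g) rfl ⟨h, hgh⟩
  have hsupp (x : V) : x ∈ p.support := by
    rw [← SimpleGraph.Walk.mem_verts_toSubgraph, hverts,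
      SimpleGraph.ConnectedComponent.mem_supp_iff, SimpleGraph.ConnectedComponent.eq]
    exact hconn x g
  obtain ⟨p, hp, hsupp, hsnd⟩ :
      ∃ p : Γ.Walk g g, p.IsCycle ∧ (∀ x, x ∈ p.support) ∧ p.snd = h := by
    by_cases hph : p.snd = h
    · exact ⟨p, hp, hsupp, hph⟩
    refine ⟨p.reverse, hp.reverse, by simpa only [SimpleGraph.Walk.support_reverse,
      List.mem_reverse] using hsupp, ?_⟩
    rw [SimpleGraph.Walk.snd_reverse]
    obtain ⟨a, b, -, hab⟩ := ncard_eq_two.1 (hΓ ⟨h, hgh⟩)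
    have hmem (x : V) (hx : Γ.Adj g x) : x = a ∨ x = b := by
      have : x ∈ Γ.neighborSet g := hx
      rwa [hab] at this
    have hne := hp.snd_ne_penultimate
    have h₁ := hmem _ (p.adj_snd hp.not_nil)
    have h₂ := hmem _ (p.adj_penultimate hp.not_nil).symm
    have h₃ := hmem h hgh
    grind
  cases p with
  | nil => exact absurd hp SimpleGraph.Walk.not_isCycle_nil
  | @cons _ x _ hx q =>
    obtain rfl : x = h := by simpa using hsnd
    have hq := ((SimpleGraph.Walk.cons_isCycle_iff q hx).1 hp).1
    refine ⟨q.reverse, hq.reverse.isHamiltonian_of_mem fun y ↦ ?_⟩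
    rw [SimpleGraph.Walk.support_reverse, List.mem_reverse]
    obtain rfl | hy := List.mem_cons.1 (hsupp y)
    · exact q.end_mem_support
    · exact hy

/-- The link of the facet `F`: its vertices are the facets adjacent to `F` (the edges of `F`), and
two of them are joined if they meet at a vertex of `F`. -/
def linkGraph (P F : Set E3) : SimpleGraph (adjacentFacets P F) where
  Adj G H := MeetAtVertex P F G H
  symm := ⟨fun _ _ h ↦ h.swap⟩
  loopless := ⟨fun _ h ↦ h.ne₂₃ rfl⟩

namespace IsSimplePolytope3

variable {P F G H : Set E3} {x : E3}

theorem isCycles_linkGraph (hP : IsSimplePolytope3 P) : (linkGraph P F).IsCycles := by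
  rintro ⟨G, hG⟩ ⟨⟨H, hH⟩, hGH⟩
  change MeetAtVertex P F G H at hGH
  obtain ⟨K, hHK, hK⟩ := hGH.exists_ne hP
  refine ncard_eq_two.2 ⟨⟨H, hH⟩, ⟨K, hK.swap.mem_adjacentFacets⟩, by simpa using hHK, ?_⟩
  ext ⟨X, hX⟩
  simp only [mem_insert_iff, mem_singleton_iff, Subtype.mk.injEq]
  refine ⟨hGH.eq_or_eq hP hK hHK, ?_⟩
  rintro (rfl | rfl)
  exacts [hGH, hK]

theorem reachable_linkGraph_of_mem (hF : IsFacetOf F P) {G H : adjacentFacets P F} (hxF : x ∈ F)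
    (hxG : x ∈ G.1) (hxH : x ∈ H.1) : (linkGraph P F).Reachable G H := by
  obtain rfl | hne := eq_or_ne G H
  · rfl
  · exact SimpleGraph.Adj.reachable ⟨hF, G.2.1, H.2.1, G.2.2.1, H.2.2.1,
      Subtype.coe_ne_coe.2 hne, x, ⟨hxF, hxG⟩, hxH⟩

theorem preconnected_linkGraph (hP : IsSimplePolytope3 P) (hF : IsFacetOf F P) :
    (linkGraph P F).Preconnected := by
  rintro ⟨G, hG⟩ ⟨H, hH⟩
  obtain ⟨G', hG'⟩ := hP.exists_meetAtVertex hF hG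
  obtain ⟨H', hH'⟩ := hP.exists_meetAtVertex hF hH
  obtain ⟨v, hv⟩ := hG'.nonempty
  obtain ⟨w, hw⟩ := hH'.nonempty
  suffices hreach : w ∈ F ∧ ∃ K : adjacentFacets P F,
      w ∈ K.1 ∧ (linkGraph P F).Reachable ⟨G, hG⟩ K by
    obtain ⟨K, hwK, hK⟩ := hreach.2
    exact hK.trans (reachable_linkGraph_of_mem hF hw.1.1 hwK hw.1.2)
  refine hP.vertex_induction
    (p := fun z ↦ z ∈ F ∧ ∃ K : adjacentFacets P F, z ∈ K.1 ∧ (linkGraph P F).Reachable ⟨G, hG⟩ K)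
    (hH'.isVertexOf hP hw) (hG'.isVertexOf hP hv) ⟨hv.1.1, ⟨G, hG⟩, hv.1.2, .rfl⟩ ?_
  rintro z z' X hz - ⟨hzF, K, hzK, hK⟩ - hwX hsub
  have hFX : F ≠ X := fun h ↦ hwX (h ▸ hw.1.1)
  obtain ⟨Z, hZ, hFZ, hXZ⟩ := hP.exists_mem_facetsAt_ne_ne hz F X
  exact ⟨(hsub ⟨⟨hF, hzF⟩, hFX⟩).2, ⟨Z, hZ.1, hFZ, z, hzF, hZ.2⟩, (hsub ⟨hZ, hXZ.symm⟩).2,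
    hK.trans (reachable_linkGraph_of_mem hF hzF hzK hZ.2)⟩

/-- The link of `F` is a cycle; removing the edge between `G` and `H` from it leaves a path. -/
theorem exists_isChain_adjacentFacets (hP : IsSimplePolytope3 P) (h : MeetAtVertex P F G H) :
    ∃ A, (G :: (A ++ [H])).Nodup ∧ (∀ X, X ∈ G :: (A ++ [H]) ↔ X ∈ adjacentFacets P F) ∧
      (G :: (A ++ [H])).IsChain (MeetAtVertex P F) := by
  classical
  have : Finite (adjacentFacets P F) :=
    (hP.isPolytope3.finite_facets.subset fun _ hX ↦ hX.1).to_subtype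
  have hGH : (linkGraph P F).Adj ⟨G, h.mem_adjacentFacets⟩ ⟨H, h.swap.mem_adjacentFacets⟩ := h
  obtain ⟨p, hp⟩ := exists_isHamiltonian_of_isCycles hP.isCycles_linkGraph
    (hP.preconnected_linkGraph h.facet₁) hGH
  obtain ⟨A, hA⟩ : ∃ A, p.support.map Subtype.val = G :: (A ++ [H]) := by
    cases p with
    | nil => exact absurd rfl h.ne₂₃
    | cons e q =>
      refine ⟨(q.support.dropLast).map Subtype.val, ?_⟩
      conv_lhs => rw [SimpleGraph.Walk.support_cons,
        ← List.dropLast_append_getLast q.support_ne_nil, q.getLast_support]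
      rw [List.map_cons, List.map_append, List.map_singleton]
  refine ⟨A, ?_⟩
  rw [← hA, List.isChain_map]
  refine ⟨hp.isPath.support_nodup.map Subtype.val_injective, fun X ↦ ?_, p.isChain_adj_support⟩
  rw [List.mem_map]
  refine ⟨?_, fun hX ↦ ⟨⟨X, hX⟩, hp.mem_support _, rfl⟩⟩
  rintro ⟨Y, -, rfl⟩
  exact Y.2

theorem facets_subset_of_forall_meetAtVertex (hP : IsSimplePolytope3 P) {S : Set (Set E3)} {v : E3}
    (hv : IsVertexOf v P) (hvS : facetsAt P v ⊆ S)
    (hS : ∀ F G H, MeetAtVertex P F G H → F ∈ S → G ∈ S → H ∈ S) : facets P ⊆ S := by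
  intro F hF
  obtain ⟨x, hx⟩ := hF.1.nonempty
  obtain ⟨w, hw, hsub⟩ := hP.isPolytope3.exists_vertex_facetsAt_subset (hF.1.subset hx)
  refine hP.vertex_induction (p := fun v ↦ facetsAt P v ⊆ S) hw hv hvS ?_ (hsub ⟨hF, hx⟩)
  rintro v v' X hv - hvS - - hsub K hK
  obtain ⟨M, hM, hXM, -⟩ := hP.exists_mem_facetsAt_ne_ne hv X X
  obtain ⟨N, hN, hXN, hMN⟩ := hP.exists_mem_facetsAt_ne_ne hv X M
  by_cases hMK : M = K
  · exact hMK ▸ hvS hM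
  by_cases hNK : N = K
  · exact hNK ▸ hvS hN
  exact hS M N K ⟨hM.1, hN.1, hK.1, hMN, hMK, hNK, v',
    ⟨(hsub ⟨hM, hXM.symm⟩).2, (hsub ⟨hN, hXN.symm⟩).2⟩, hK.2⟩ (hvS hM) (hvS hN)

end IsSimplePolytope3

/-! ### Flag 3-polytopes -/

namespace IsFlag3Polytope

variable {P F G H : Set E3}

theorem isSimplePolytope3 (hP : IsFlag3Polytope P) : IsSimplePolytope3 P := hP.1

theorem meetAtVertex (hP : IsFlag3Polytope P) (hF : IsFacetOf F P) (hFG : G ∈ adjacentFacets P F)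
    (hFH : H ∈ adjacentFacets P F) (hGH : H ∈ adjacentFacets P G) : MeetAtVertex P F G H := by
  refine ⟨hF, hFG.1, hFH.1, hFG.2.1, hFH.2.1, hGH.2.1, ?_⟩
  by_contra hempty
  rw [not_nonempty_iff_eq_empty] at hempty
  refine hP.2.2 ![F, G, H] ⟨le_rfl, ⟨by norm_num, ?_, ?_⟩, ?_, by norm_num⟩
  · simpa [Fin.forall_fin_succ] using ⟨hF, hFG.1, hFH.1⟩
  · intro _ i
    fin_cases i
    exacts [hP.1.isEdgeOf_inter hF hFG, hP.1.isEdgeOf_inter hFG.1 hGH,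
      hP.1.isEdgeOf_inter hFH.1 (mem_adjacentFacets_symm hF hFH)]
  · intro _ i
    fin_cases i
    exacts [hempty, by rw [← hempty]; exact (inter_assoc F G H).symm ▸ inter_comm (G ∩ H) F,
      by rw [← hempty]; exact (inter_assoc H F G).symm ▸ inter_comm H (F ∩ G)]

/-- Otherwise the four facets would be the facets of a tetrahedron. -/
theorem not_pairwise_inter_nonempty (hP : IsFlag3Polytope P) {S : Set (Set E3)} (hS : S ⊆ facets P)
    (hcard : S.ncard = 4) : ¬ S.Pairwise fun F G ↦ (F ∩ G).Nonempty := by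
  intro hpair
  have hcorner {F G H : Set E3} (hF : F ∈ S) (hG : G ∈ S) (hH : H ∈ S) (hFG : F ≠ G) (hFH : F ≠ H)
      (hGH : G ≠ H) : MeetAtVertex P F G H :=
    hP.meetAtVertex (hS hF) ⟨hS hG, hFG, hpair hF hG hFG⟩ ⟨hS hH, hFH, hpair hF hH hFH⟩
      ⟨hS hH, hGH, hpair hG hH hGH⟩
  have hdiff {F G : Set E3} (hF : F ∈ S) (hG : G ∈ S) (hFG : F ≠ G) :
      ∃ M N, M ≠ N ∧ S \ {F, G} = {M, N} := by
    rw [← ncard_eq_two, ncard_sdiff (pair_subset hF hG), hcard, ncard_pair hFG]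
  obtain ⟨F, hF⟩ : S.Nonempty := nonempty_of_ncard_ne_zero (by omega)
  obtain ⟨G, hG, hGF⟩ := exists_ne_of_one_lt_ncard (by omega : 1 < S.ncard) F
  obtain ⟨H, H', -, hH⟩ := hdiff hF hG hGF.symm
  have hHS : H ∈ S \ {F, G} := hH ▸ mem_insert H _
  simp only [mem_sdiff, mem_insert_iff, mem_singleton_iff, not_or] at hHS
  have hFGH := hcorner hF hG hHS.1 hGF.symm (Ne.symm hHS.2.1) (Ne.symm hHS.2.2)
  obtain ⟨v, hv⟩ := hFGH.nonempty
  have hvS : facetsAt P v ⊆ S := by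
    rw [hFGH.facetsAt_eq hP.1 hv]
    exact insert_subset hF (pair_subset hG hHS.1)
  refine hP.2.1 ((hS.antisymm (hP.1.facets_subset_of_forall_meetAtVertex
    (hFGH.isVertexOf hP.1 hv) hvS fun A B C hABC hA hB ↦ ?_)) ▸ hcard)
  obtain ⟨M, N, hMN, hdiff⟩ := hdiff hA hB hABC.ne₁₂
  have hM : M ∈ S \ {A, B} := hdiff ▸ mem_insert M _
  have hN : N ∈ S \ {A, B} := hdiff ▸ mem_insert_of_mem M rfl
  simp only [mem_sdiff, mem_insert_iff, mem_singleton_iff, not_or] at hM hN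
  obtain rfl | rfl := (hcorner hA hB hM.1 hABC.ne₁₂ (Ne.symm hM.2.1) (Ne.symm hM.2.2)).eq_or_eq
    hP.1 (hcorner hA hB hN.1 hABC.ne₁₂ (Ne.symm hN.2.1) (Ne.symm hN.2.2)) hMN hABC
  exacts [hM.1, hN.1]

theorem four_le_ncard_adjacentFacets (hP : IsFlag3Polytope P) (h : MeetAtVertex P F G H) :
    4 ≤ (adjacentFacets P F).ncard := by
  obtain ⟨H', hHH', hGH'⟩ := h.exists_ne hP.1
  obtain ⟨K, hGK, hHK⟩ := h.swap.exists_ne hP.1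
  have hKH' : K ≠ H' := by
    rintro rfl
    refine hP.not_pairwise_inter_nonempty (S := {F, G, H, K}) ?_ ?_ ?_
    · exact insert_subset h.facet₁ <| insert_subset h.facet₂ <|
        pair_subset h.facet₃ hHK.facet₃
    · rw [ncard_insert_of_notMem (by simp [h.ne₁₂, h.ne₁₃, hHK.ne₁₃]),
        ncard_insert_of_notMem (by simp [h.ne₂₃, hGK]), ncard_pair hHH']
    · have hFG := h.mem_adjacentFacets.2.2
      have hFH := h.swap.mem_adjacentFacets.2.2
      have hFK := hHK.swap.mem_adjacentFacets.2.2
      have hGH := h.rotate.mem_adjacentFacets.2.2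
      have hGK := hGH'.rotate.mem_adjacentFacets.2.2
      have hHK := hHK.rotate.mem_adjacentFacets.2.2
      rintro X (rfl | rfl | rfl | rfl) Y (rfl | rfl | rfl | rfl) hXY
      all_goals first
        | exact absurd rfl hXY
        | assumption
        | (rw [inter_comm]; assumption)
  have hcard : ({G, H, H', K} : Set (Set E3)).ncard = 4 := by
    rw [ncard_insert_of_notMem (by simp [h.ne₂₃, hGH'.ne₂₃, hGK]),
      ncard_insert_of_notMem (by simp [hHH', hHK.ne₂₃]), ncard_pair hKH'.symm]
  rw [← hcard]
  refine ncard_le_ncard ?_ (hP.1.isPolytope3.finite_facets.subset fun _ hX ↦ hX.1)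
  exact insert_subset h.mem_adjacentFacets <| insert_subset h.swap.mem_adjacentFacets <|
    pair_subset hGH'.swap.mem_adjacentFacets hHK.swap.mem_adjacentFacets

end IsFlag3Polytope

/-! ### Cyclic sequences -/

section Cyclic

variable {k n : ℕ}

theorem val_nxt (t : Fin n) : (nxt t).1 = if t.1 + 1 = n then 0 else t.1 + 1 := by
  simp only [nxt]
  split_ifs with h
  · rw [h, Nat.mod_self]
  · exact Nat.mod_eq_of_lt (by omega)

theorem prv_nxt (t : Fin n) : prv (nxt t) = t := by
  refine Fin.ext ?_
  change ((nxt t).1 + (n - 1)) % n = t.1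
  rw [val_nxt]
  split_ifs with h
  · rw [zero_add, Nat.mod_eq_of_lt (by omega)]
    omega
  · rw [show t.1 + 1 + (n - 1) = t.1 + n by omega, Nat.add_mod_right, Nat.mod_eq_of_lt t.2]

theorem nxt_injective : Function.Injective (nxt (k := n)) :=
  Function.LeftInverse.injective prv_nxt

theorem nxt_prv (t : Fin n) : nxt (prv t) = t := by
  obtain ⟨s, rfl⟩ := Finite.surjective_of_injective nxt_injective t
  rw [prv_nxt]

theorem nxt_ne_self (hn : 2 ≤ n) (t : Fin n) : nxt t ≠ t := by
  intro h
  have := congrArg Fin.val h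
  rw [val_nxt] at this
  split_ifs at this <;> omega

theorem nxt_nxt_ne_self (hn : 3 ≤ n) (t : Fin n) : nxt (nxt t) ≠ t := by
  intro h
  have := congrArg Fin.val h
  rw [val_nxt, val_nxt] at this
  split_ifs at this <;> omega

theorem nxt_induction {p : Fin n → Prop} {t : Fin n} (ht : p t) (hp : ∀ s, p s → p (nxt s))
    (s : Fin n) : p s := by
  have hiter (d : ℕ) : p ⟨(t.1 + d) % n, Nat.mod_lt _ t.pos⟩ := by
    induction d with
    | zero => simpa [Nat.mod_eq_of_lt t.2] using ht
    | succ d ih => simpa [nxt, ← add_assoc] using hp _ ih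
  convert hiter (s.1 + n - t.1)
  rw [show t.1 + (s.1 + n - t.1) = s.1 + n by omega, Nat.add_mod_right, Nat.mod_eq_of_lt s.2]

/-- `φ` counts, modulo `k`, how often `p` has been met. -/
theorem exists_cyclic_count (p : Fin n → Prop) [DecidablePred p]
    (hcard : Fintype.card {t // p t} = k) (hk : 0 < k) : ∃ φ : Fin n → Fin k,
      (∀ t, p t → φ (nxt t) = nxt (φ t)) ∧ ∀ t, ¬p t → φ (nxt t) = φ t := by
  let q (m : ℕ) : Prop := ∃ h : m < n, p ⟨m, h⟩
  have hq (t : Fin n) : q t ↔ p t := ⟨fun h ↦ h.2, fun h ↦ ⟨t.2, h⟩⟩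
  have hcount : Nat.count q n = k := by
    rw [Nat.count_eq_card_filter_range, ← hcard, Fintype.card_subtype, Finset.card_filter,
      Finset.card_filter, Finset.sum_range]
    simp only [hq]
  refine ⟨fun t ↦ ⟨Nat.count q t % k, Nat.mod_lt _ hk⟩, ?_⟩
  have hnxt (t : Fin n) : Nat.count q (nxt t) % k = Nat.count q (t + 1) % k := by
    rw [val_nxt]
    split_ifs with h
    · rw [h, hcount, Nat.count_zero, Nat.zero_mod, Nat.mod_self]
    · rfl
  refine ⟨fun t ht ↦ Fin.ext ?_, fun t ht ↦ Fin.ext ?_⟩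
  · change Nat.count q (nxt t) % k = (Nat.count q t % k + 1) % k
    rw [hnxt, Nat.count_succ, if_pos ((hq t).2 ht), Nat.mod_add_mod]
  · change Nat.count q (nxt t) % k = Nat.count q t % k
    rw [hnxt, Nat.count_succ, if_neg (mt (hq t).1 ht), add_zero]

theorem bijective_cyclic_count {p : Fin n → Prop} [DecidablePred p]
    (hcard : Fintype.card {t // p t} = k) (hk : 0 < k) {φ : Fin n → Fin k}
    (hstep : ∀ t, p t → φ (nxt t) = nxt (φ t)) (hstay : ∀ t, ¬p t → φ (nxt t) = φ t) :
    Function.Bijective fun t : {t // p t} ↦ φ t := by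
  refine (Fintype.bijective_iff_surjective_and_card _).2 ⟨?_, by rw [hcard, Fintype.card_fin]⟩
  obtain ⟨⟨t₀, ht₀⟩⟩ := Fintype.card_pos_iff.1 (hcard ▸ hk)
  refine nxt_induction (t := φ t₀) ⟨⟨t₀, ht₀⟩, rfl⟩ ?_
  rintro _ ⟨⟨t, ht⟩, rfl⟩
  by_contra hno
  refine hno ⟨⟨t, ht⟩, nxt_induction (p := fun s ↦ φ s = nxt (φ t)) (hstep t ht) (fun s hs ↦ ?_) t⟩
  rw [hstay s fun hps ↦ hno ⟨⟨s, hps⟩, hs⟩, hs]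

theorem exists_cyclic_dedup {α : Type*} [DecidableEq α] (A : Fin n → α)
    (hcard : Fintype.card {t // A (nxt t) ≠ A t} = k) (hk : 0 < k) :
    ∃ (B : Fin k → α) (φ : Fin n → Fin k), (∀ t, B (φ t) = A t) ∧
      (∀ t, A (nxt t) ≠ A t → φ (nxt t) = nxt (φ t)) ∧ (∀ t, A (nxt t) = A t → φ (nxt t) = φ t) ∧
      ∀ j, ∃ t, A (nxt t) ≠ A t ∧ φ t = j := by
  obtain ⟨φ, hstep, hstay⟩ := exists_cyclic_count _ hcard hk
  have hbij := bijective_cyclic_count hcard hk hstep hstay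
  choose c hc using hbij.2
  have hBφ (t : Fin n) (ht : A (nxt t) ≠ A t) : A (c (φ t)) = A t :=
    congrArg (fun s : {t // A (nxt t) ≠ A t} ↦ A s) (hbij.1 (a₂ := ⟨t, ht⟩) (hc (φ t)))
  refine ⟨fun j ↦ A (c j), φ, ?_, hstep, fun t ht ↦ hstay t (not_not.2 ht),
    fun j ↦ ⟨c j, (c j).2, hc j⟩⟩
  by_contra! hno
  obtain ⟨t, ht⟩ := hno
  have hall := nxt_induction (p := fun s ↦ A (c (φ s)) ≠ A s) ht fun s hs ↦ by
    have hA : A (nxt s) = A s := by_contra fun hne ↦ hs (hBφ s hne)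
    rwa [hA, hstay s (not_not.2 hA)]
  exact hall (c ⟨0, hk⟩) (hBφ _ (c ⟨0, hk⟩).2)

variable {α : Type*} {R : α → α → Prop}

theorem rel_get_nxt {l : List α} (hchain : l.IsChain R)
    (hlast : ∀ x ∈ l.getLast?, ∀ y ∈ l.head?, R x y) (t : Fin l.length) :
    R (l.get t) (l.get (nxt t)) := by
  have hval := val_nxt t
  split_ifs at hval with h
  · refine hlast _ ?_ _ ?_
    · rw [List.getLast?_eq_getElem?, Option.mem_def, List.getElem?_eq_some_iff]
      exact ⟨by omega, by simp only [List.get_eq_getElem, ← h, add_tsub_cancel_right]⟩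
    · rw [List.head?_eq_getElem?, Option.mem_def, List.getElem?_eq_some_iff]
      exact ⟨t.pos, by simp only [List.get_eq_getElem, hval]⟩
  · simp only [List.get_eq_getElem, hval]
    exact List.isChain_iff_getElem.1 hchain t.1 (by omega)

theorem exists_cyclic_concat (M : Fin k → List α) (hne : ∀ i, M i ≠ [])
    (hnodup : ∀ i, (M i).Nodup) (hdisj : Pairwise fun i j ↦ (M i).Disjoint (M j))
    (hchain : ∀ i, (M i).IsChain R)
    (hjoin : ∀ i, ∀ x ∈ (M i).getLast?, ∀ y ∈ (M (nxt i)).head?, R x y) :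
    ∃ e : Fin (∑ i, (M i).length) → α, Function.Injective e ∧ range e = {x | ∃ i, x ∈ M i} ∧
      ∀ t, R (e t) (e (nxt t)) := by
  have hlen : (List.ofFn M).flatten.length = ∑ i, (M i).length := by
    rw [List.length_flatten, List.map_ofFn, List.sum_ofFn]
    rfl
  rw [← hlen]
  refine ⟨(List.ofFn M).flatten.get, List.nodup_iff_injective_get.1 (List.nodup_flatten.2
    ⟨List.forall_mem_ofFn_iff.2 hnodup, List.pairwise_ofFn.2 fun i j hij ↦ hdisj hij.ne⟩), ?_,
    rel_get_nxt ((List.isChain_flatten ?_).2 ⟨List.forall_mem_ofFn_iff.2 hchain, ?_⟩) ?_⟩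
  · ext x
    simp only [range_list_get, mem_ofPred_eq, List.mem_flatten, List.mem_ofFn, exists_exists_eq_and]
  · simpa using fun i hi ↦ hne i hi
  · refine List.isChain_ofFn.2 fun i hi ↦ ?_
    convert hjoin ⟨i, by omega⟩
    rw [val_nxt, if_neg hi.ne]
  · intro x hx y hy
    obtain _ | k := k
    · simp at hx
    have hlast : nxt (Fin.last k) = 0 := Fin.ext (by rw [val_nxt]; simp)
    refine hjoin (Fin.last k) x ?_ y (hlast ▸ ?_)
    · rw [List.ofFn_succ', List.concat_eq_append, List.flatten_append, List.flatten_singleton,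
        List.getLast?_append_of_ne_nil _ (hne _)] at hx
      exact hx
    · rw [List.ofFn_succ, List.flatten_cons, List.head?_append_of_ne_nil _ (hne _)] at hy
      exact hy

end Cyclic

/-! ### The curve around a set of facets -/

/-- The set of points where a facet in `I` meets a facet of `P` outside `I`; it separates, within
the boundary of `P`, the facets in `I` from the remaining ones. -/
def separatingCurve (P : Set E3) (I : Set (Set E3)) : Set E3 :=
  {x | ∃ F ∈ I, ∃ G ∈ facets P, G ∉ I ∧ x ∈ F ∧ x ∈ G}

section SeparatingCurve

variable {P C F G : Set E3} {I : Set (Set E3)} {a m x : E3}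

theorem notMem_separatingCurve (hI : I ⊆ facets P)
    (hx : facetsAt P x ⊆ I ∨ Disjoint (facetsAt P x) I) : x ∉ separatingCurve P I := by
  rintro ⟨F, hF, G, hG, hGI, hxF, hxG⟩
  obtain hsub | hdisj := hx
  · exact hGI (hsub ⟨hG, hxG⟩)
  · exact hdisj.le_bot ⟨⟨hI hF, hxF⟩, hF⟩

theorem facetsAt_subset_of_mem_segment (ha : a ∈ P) (hm : m ∈ P)
    (ham : facetsAt P a ⊆ facetsAt P m) (hx : x ∈ segment ℝ a m) :
    facetsAt P x ⊆ facetsAt P m := by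
  rw [← insert_endpoints_openSegment] at hx
  obtain rfl | rfl | hx := hx
  · exact ham
  · rfl
  · exact fun K hK ↦ ⟨hK.1, hK.1.1.isExtreme.right_mem_of_mem_openSegment ha hm hK.2 hx⟩

theorem connectedComponentIn_eq_of_facetsAt_eq_singleton (hP : IsPolytope3 P) (hI : I ⊆ facets P)
    (ha : facetsAt P a = {F}) (hFm : F ∈ facetsAt P m)
    (hm : facetsAt P m ⊆ I ∨ Disjoint (facetsAt P m) I) :
    connectedComponentIn (frontier P \ separatingCurve P I) a =
      connectedComponentIn (frontier P \ separatingCurve P I) m := by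
  have hFa : F ∈ facetsAt P a := ha ▸ mem_singleton F
  have hF := hFm.1
  have hseg : segment ℝ a m ⊆ frontier P \ separatingCurve P I := by
    refine fun x hx ↦ ⟨hP.facet_subset_frontier hF (hF.1.convex.segment_subset hFa.2 hFm.2 hx), ?_⟩
    have hxm : facetsAt P x ⊆ facetsAt P m := facetsAt_subset_of_mem_segment (hF.1.subset hFa.2)
      (hF.1.subset hFm.2) (ha ▸ singleton_subset_iff.2 hFm) hx
    exact notMem_separatingCurve hI (hm.imp hxm.trans (Disjoint.mono_left hxm))
  exact connectedComponentIn_eq ((convex_segment a m).isPreconnected.subset_connectedComponentIn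
    (left_mem_segment ℝ a m) hseg (right_mem_segment ℝ a m))

theorem IsSimplePolytope3.exists_facetsAt_eq_pair (hP : IsSimplePolytope3 P) (hF : IsFacetOf F P)
    (hG : G ∈ adjacentFacets P F) : ∃ m, facetsAt P m = {F, G} := by
  obtain ⟨H, hH⟩ := hP.exists_meetAtVertex hF hG
  obtain ⟨x, hx⟩ := hH.nonempty
  obtain ⟨K, y, hHK, hK, hy, hseg⟩ := hH.exists_inter_eq_segment hP hx
  have hopen := midpoint_mem_openSegment (𝕜 := ℝ) x y
  have hm : midpoint ℝ x y ∈ F ∩ G := hseg ▸ openSegment_subset_segment ℝ x y hopen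
  refine ⟨midpoint ℝ x y, Subset.antisymm (fun X hX ↦ ?_) <|
    insert_subset ⟨hF, hm.1⟩ <| singleton_subset_iff.2 ⟨hG.1, hm.2⟩⟩
  have hxP := hF.1.subset hx.1.1
  have hyP := hF.1.subset hy.1.1
  have hXx : X ∈ facetsAt P x :=
    ⟨hX.1, hX.1.1.isExtreme.left_mem_of_mem_openSegment hxP hyP hX.2 hopen⟩
  have hXy : X ∈ facetsAt P y :=
    ⟨hX.1, hX.1.1.isExtreme.right_mem_of_mem_openSegment hxP hyP hX.2 hopen⟩
  rw [hH.facetsAt_eq hP hx] at hXx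
  rw [hK.facetsAt_eq hP hy] at hXy
  obtain rfl | rfl | rfl := hXx
  · exact mem_insert _ _
  · exact mem_insert_of_mem _ rfl
  · exact hXy.imp_right fun h ↦ h.resolve_right hHK

theorem IsSimplePolytope3.connectedComponentIn_eq_of_mem_adjacentFacets (hP : IsSimplePolytope3 P)
    (hI : I ⊆ facets P) (hF : IsFacetOf F P) (hG : G ∈ adjacentFacets P F)
    (hFG : {F, G} ⊆ I ∨ Disjoint {F, G} I) (ha : facetsAt P a = {F}) (hx : facetsAt P x = {G}) :
    connectedComponentIn (frontier P \ separatingCurve P I) a =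
      connectedComponentIn (frontier P \ separatingCurve P I) x := by
  obtain ⟨m, hm⟩ := hP.exists_facetsAt_eq_pair hF hG
  rw [← hm] at hFG
  rw [connectedComponentIn_eq_of_facetsAt_eq_singleton hP.isPolytope3 hI ha (by simp [hm]) hFG,
    connectedComponentIn_eq_of_facetsAt_eq_singleton hP.isPolytope3 hI hx (by simp [hm]) hFG]

theorem IsLoop.mem_adjacentFacets {k : ℕ} {L : Fin k → Set E3} (hL : IsLoop P L) (hk : 2 ≤ k)
    (i : Fin k) : L (nxt i) ∈ adjacentFacets P (L i) := by
  have hedge := hL.2.2 hk i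
  refine ⟨hL.2.1 _, fun heq ↦ ?_, hedge.1.nonempty⟩
  have hdim := hedge.2
  rw [← heq, inter_self, (hL.2.1 i).2] at hdim
  norm_num at hdim

theorem IsSimplePolytope3.exists_isCompOf_of_isLoop {k : ℕ} {L : Fin k → Set E3}
    (hP : IsSimplePolytope3 P) (hI : I ⊆ facets P) (hL : IsLoop P L)
    (hLI : range L ⊆ I ∨ Disjoint (range L) I) :
    ∃ C, IsCompOf C (frontier P \ separatingCurve P I) ∧ ∀ i, intrinsicInterior ℝ (L i) ⊆ C := by
  have hsplit {J : Set (Set E3)} (hJ : J ⊆ range L) : J ⊆ I ∨ Disjoint J I :=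
    hLI.imp hJ.trans (Disjoint.mono_left hJ)
  have hfacetsAt {i : Fin k} {y : E3} (hy : y ∈ intrinsicInterior ℝ (L i)) :
      facetsAt P y = {L i} := (hL.2.1 i).facetsAt_of_mem_intrinsicInterior hy
  have hmem {i : Fin k} {y : E3} (hy : y ∈ intrinsicInterior ℝ (L i)) :
      y ∈ frontier P \ separatingCurve P I :=
    ⟨hP.isPolytope3.facet_subset_frontier (hL.2.1 i) (intrinsicInterior_subset hy),
      notMem_separatingCurve hI (hfacetsAt hy ▸ hsplit (by simp))⟩
  have hsame {i : Fin k} {y z : E3} (hy : y ∈ intrinsicInterior ℝ (L i))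
      (hz : z ∈ intrinsicInterior ℝ (L i)) :=
    connectedComponentIn_eq_of_facetsAt_eq_singleton hP.isPolytope3 hI (hfacetsAt hy)
      (hfacetsAt hz ▸ mem_singleton (L i)) (hfacetsAt hz ▸ hsplit (by simp))
  obtain ⟨x, hx⟩ := (hL.2.1 ⟨0, hL.1⟩).1.nonempty_intrinsicInterior
  refine ⟨_, ⟨x, hmem hx, rfl⟩, fun i y hy ↦ ?_⟩
  suffices hcomp : ∀ z ∈ intrinsicInterior ℝ (L i),
      connectedComponentIn (frontier P \ separatingCurve P I) x =
        connectedComponentIn (frontier P \ separatingCurve P I) z from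
    hcomp y hy ▸ mem_connectedComponentIn (hmem hy)
  refine nxt_induction (p := fun i ↦ ∀ z ∈ intrinsicInterior ℝ (L i), _ =
    connectedComponentIn (frontier P \ separatingCurve P I) z) (fun z hz ↦ hsame hx hz)
    (fun i hi z hz ↦ ?_) i
  obtain hk | hk : k = 1 ∨ 2 ≤ k := by have := hL.1; omega
  · subst hk
    exact hi z (Subsingleton.elim (nxt i) i ▸ hz)
  · obtain ⟨w, hw⟩ := (hL.2.1 i).1.nonempty_intrinsicInterior
    rw [hi w hw]
    exact hP.connectedComponentIn_eq_of_mem_adjacentFacets hI (hL.2.1 i)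
      (hL.mem_adjacentFacets hk i) (hsplit (pair_subset (mem_range_self _) (mem_range_self _)))
      (hfacetsAt hw) (hfacetsAt hz)

theorem mem_of_isPreconnected_diff_separatingCurve (hP : IsPolytope3 P) (hI : I ⊆ facets P)
    (hC : IsPreconnected C) (hCγ : C ⊆ frontier P \ separatingCurve P I) (hF : F ∈ I)
    (hG : IsFacetOf G P) (hCF : (C ∩ F).Nonempty) (hCG : (C ∩ G).Nonempty) : G ∈ I := by
  by_contra hGI
  have hclosed {J : Set (Set E3)} (hJ : J ⊆ facets P) : IsClosed (⋃ K ∈ J, K) :=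
    (hP.finite_facets.subset hJ).isClosed_biUnion fun K hK ↦ (hJ hK).1.isClosed
  have hcover : C ⊆ (⋃ K ∈ I, K) ∪ ⋃ K ∈ facets P \ I, K := by
    intro z hz
    obtain ⟨K, hK, hzK⟩ := hP.exists_facet_mem_of_mem_frontier (hCγ hz).1
    by_cases hKI : K ∈ I
    · exact .inl (mem_biUnion hKI hzK)
    · exact .inr (mem_biUnion (show K ∈ facets P \ I from ⟨hK, hKI⟩) hzK)
  obtain ⟨z, hzC, hzI, hzI'⟩ := isPreconnected_closed_iff.1 hC _ _ (hclosed hI)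
    (hclosed sdiff_subset) hcover
    (hCF.mono (inter_subset_inter_right _ (subset_biUnion_of_mem (u := id) hF)))
    (hCG.mono (inter_subset_inter_right _ (subset_biUnion_of_mem (u := id)
      (show G ∈ facets P \ I from ⟨hG, hGI⟩))))
  obtain ⟨K, hK, hzK⟩ := mem_iUnion₂.1 hzI
  obtain ⟨K', hK', hzK'⟩ := mem_iUnion₂.1 hzI'
  exact (hCγ hzC).2 ⟨K, hK, K', hK'.1, hK'.2, hzK, hzK'⟩

end SeparatingCurve

/-! ### Walking round a loop -/

/-- A step of the walk along the outside of the loop `L`. A pair `(i, G)` stands for the edge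
`L i ∩ G`; a step turns to the next edge either on the same facet of `L` or on the same outer
facet. -/
def BoundaryStep {m : ℕ} (P : Set E3) (L : Fin m → Set E3) (a b : Fin m × Set E3) : Prop :=
  (b.1 = a.1 ∧ MeetAtVertex P (L a.1) a.2 b.2) ∨
    (b.1 = nxt a.1 ∧ b.2 = a.2 ∧ MeetAtVertex P (L a.1) (L (nxt a.1)) a.2)

/-- `e` is a closed walk once along all the edges at which a facet of `L` meets a facet outside
`L`, where `(i, G)` stands for the edge `L i ∩ G`, as in `BoundaryStep`. -/
structure IsBoundaryWalk {m n : ℕ} (P : Set E3) (L : Fin m → Set E3)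
    (e : Fin n → Fin m × Set E3) : Prop where
  injective : Function.Injective e
  mem_range_iff : ∀ i G, (i, G) ∈ range e ↔ G ∈ adjacentFacets P (L i) ∧ G ∉ range L
  step : ∀ t, BoundaryStep P L (e t) (e (nxt t))
  exists_fst_eq : ∀ i, ∃ t, (e t).1 = i
  corner_unique : ∀ i G H, MeetAtVertex P (L i) (L (nxt i)) G → G ∉ range L →
    MeetAtVertex P (L i) (L (nxt i)) H → H ∉ range L → G = H

namespace BoundaryStep

variable {m : ℕ} {P G : Set E3} {L : Fin m → Set E3} {a b : Fin m × Set E3} {i : Fin m} {x : E3}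

theorem exists_facetsAt_eq (hP : IsSimplePolytope3 P) (h : BoundaryStep P L a b) :
    ∃ x, IsVertexOf x P ∧ facetsAt P x = {L a.1, L b.1, a.2, b.2} := by
  obtain ⟨h₁, hmeet⟩ | ⟨h₁, h₂, hmeet⟩ := h
  all_goals
    obtain ⟨x, hx⟩ := hmeet.nonempty
    refine ⟨x, hmeet.isVertexOf hP hx, ?_⟩
  · rw [hmeet.facetsAt_eq hP hx, h₁, insert_idem]
  · rw [hmeet.facetsAt_eq hP hx, h₁, h₂, pair_eq_singleton]

theorem eq_or_eq_of_mem_facetsAt (h : BoundaryStep P L a b) (hL : Function.Injective L)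
    (ha : a.2 ∉ range L) (hb : b.2 ∉ range L) (hx : facetsAt P x = {L a.1, L b.1, a.2, b.2})
    (hi : L i ∈ facetsAt P x) (hG : G ∈ facetsAt P x) (hGL : G ∉ range L) :
    (i, G) = a ∨ (i, G) = b := by
  have hfst : i = a.1 ∨ i = b.1 := by
    rw [hx] at hi
    obtain hi | hi | hi | hi := hi
    · exact .inl (hL hi)
    · exact .inr (hL hi)
    · exact (ha ⟨i, hi⟩).elim
    · exact (hb ⟨i, hi⟩).elim
  have hsnd : G = a.2 ∨ G = b.2 := by
    rw [hx] at hG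
    obtain rfl | rfl | hG := hG
    · exact (hGL (mem_range_self _)).elim
    · exact (hGL (mem_range_self _)).elim
    · exact hG
  simp only [Prod.ext_iff]
  obtain ⟨h₁, -⟩ | ⟨-, h₂, -⟩ := h
  · rw [h₁, or_self] at hfst
    rw [h₁]
    exact hsnd.imp (⟨hfst, ·⟩) (⟨hfst, ·⟩)
  · rw [h₂, or_self] at hsnd
    rw [h₂]
    exact hfst.imp (⟨·, hsnd⟩) (⟨·, hsnd⟩)

end BoundaryStep

namespace IsBoundaryWalk

variable {k m n : ℕ} {P C γ : Set E3} {L : Fin m → Set E3} {e : Fin n → Fin m × Set E3}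
  {v : Fin n → E3}

theorem mem_adjacentFacets (h : IsBoundaryWalk P L e) (t : Fin n) :
    (e t).2 ∈ adjacentFacets P (L (e t).1) :=
  ((h.mem_range_iff _ _).1 (mem_range_self t)).1

theorem notMem_range (h : IsBoundaryWalk P L e) (t : Fin n) : (e t).2 ∉ range L :=
  ((h.mem_range_iff _ _).1 (mem_range_self t)).2

theorem separatingCurve_eq (h : IsBoundaryWalk P L e) :
    separatingCurve P (range L) = ⋃ t, L (e t).1 ∩ (e t).2 := by
  ext x
  simp only [mem_iUnion]
  constructor
  · rintro ⟨_, ⟨i, rfl⟩, G, hG, hGL, hxi, hxG⟩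
    obtain ⟨t, ht⟩ := (h.mem_range_iff i G).2
      ⟨⟨hG, fun heq ↦ hGL ⟨i, heq⟩, x, hxi, hxG⟩, hGL⟩
    exact ⟨t, by rw [ht]; exact ⟨hxi, hxG⟩⟩
  · rintro ⟨t, hxi, hxG⟩
    exact ⟨_, mem_range_self _, _, (h.mem_adjacentFacets t).1, h.notMem_range t, hxi, hxG⟩

/-- Only the edges `t` and `nxt t` of the walk contain the vertex at which it turns from one to the
other, so these vertices are distinct. -/
theorem exists_turning_vertex (hP : IsSimplePolytope3 P) (hL : Function.Injective L)
    (h : IsBoundaryWalk P L e) (hn : 3 ≤ n) : ∃ w : Fin n → E3, Function.Injective w ∧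
      ∀ t, IsVertexOf (w t) P ∧ facetsAt P (w t) =
        {L (e t).1, L (e (nxt t)).1, (e t).2, (e (nxt t)).2} := by
  choose w hw hfacets using fun t ↦ (h.step t).exists_facetsAt_eq hP
  have heq {s t : Fin n} (hs : L (e s).1 ∈ facetsAt P (w t)) (hs' : (e s).2 ∈ facetsAt P (w t)) :
      s = t ∨ s = nxt t :=
    ((h.step t).eq_or_eq_of_mem_facetsAt hL (h.notMem_range t) (h.notMem_range _) (hfacets t) hs
      hs' (h.notMem_range s)).imp (@h.injective _ _) (@h.injective _ _)
  refine ⟨w, fun s t hst ↦ ?_, fun t ↦ ⟨hw t, hfacets t⟩⟩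
  have hs : s = t ∨ s = nxt t := heq (by simp [← hst, hfacets]) (by simp [← hst, hfacets])
  have hs' : nxt s = t ∨ nxt s = nxt t :=
    heq (by simp [← hst, hfacets]) (by simp [← hst, hfacets])
  obtain rfl | rfl := hs
  · rfl
  · exact hs'.elim (fun hs' ↦ (nxt_nxt_ne_self hn t hs').elim) fun hs' ↦ nxt_injective hs'

theorem exists_isSimpleEdgeCycleVia (hP : IsSimplePolytope3 P) (hL : IsSimpleLoop P L)
    (h : IsBoundaryWalk P L e) (hn : 3 ≤ n) : ∃ v : Fin n → E3,
      IsSimpleEdgeCycleVia P (separatingCurve P (range L)) v ∧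
        ∀ t, segment ℝ (v t) (v (nxt t)) = L (e t).1 ∩ (e t).2 := by
  obtain ⟨w, hinj, hw⟩ := h.exists_turning_vertex hP hL.2 hn
  have hinj' : Function.Injective fun t ↦ w (prv t) :=
    hinj.comp (Function.LeftInverse.injective nxt_prv)
  have hseg (t : Fin n) : segment ℝ (w (prv t)) (w (prv (nxt t))) = L (e t).1 ∩ (e t).2 := by
    have hG := h.mem_adjacentFacets t
    refine (hP.inter_eq_segment (hL.1.2.1 _) hG.1 hG.2.1 (hw _).1 (hw _).1
      (fun heq ↦ nxt_ne_self (by omega) t (hinj' heq).symm) ?_ ?_).symm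
    · have hfacets := (hw (prv t)).2
      rw [nxt_prv] at hfacets
      exact ⟨(show L (e t).1 ∈ facetsAt P _ by simp [hfacets]).2,
        (show (e t).2 ∈ facetsAt P _ by simp [hfacets]).2⟩
    · rw [prv_nxt]
      have hfacets := (hw t).2
      exact ⟨(show L (e t).1 ∈ facetsAt P _ by simp [hfacets]).2,
        (show (e t).2 ∈ facetsAt P _ by simp [hfacets]).2⟩
  refine ⟨fun t ↦ w (prv t), ⟨hn, hinj', fun t ↦ (hw _).1, fun t ↦ ?_, ?_⟩, hseg⟩
  · rw [hseg]
    exact hP.isEdgeOf_inter (hL.1.2.1 _) (h.mem_adjacentFacets t)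
  · simp only [hseg, h.separatingCurve_eq]

theorem fst_ne_iff (hm : 2 ≤ m) (h : IsBoundaryWalk P L e) (t : Fin n) :
    (e (nxt t)).1 ≠ (e t).1 ↔ (e (nxt t)).2 = (e t).2 := by
  obtain ⟨h₁, hmeet⟩ | ⟨h₁, h₂, -⟩ := h.step t
  · simp [h₁, hmeet.ne₂₃.symm]
  · simp [h₁, h₂, nxt_ne_self hm]

theorem meetAtVertex_of_fst_ne (h : IsBoundaryWalk P L e) {t : Fin n}
    (ht : (e (nxt t)).1 ≠ (e t).1) :
    MeetAtVertex P (L (e t).1) (L (nxt (e t).1)) (e t).2 :=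
  (h.step t).elim (fun hs ↦ (ht hs.1).elim) fun hs ↦ hs.2.2

theorem card_fst_ne (hm : 2 ≤ m) (h : IsBoundaryWalk P L e) :
    Fintype.card {t // (e (nxt t)).1 ≠ (e t).1} = m := by
  refine (Fintype.card_of_bijective (f := fun t : {t // (e (nxt t)).1 ≠ (e t).1} ↦ (e t).1)
    ⟨fun s t hst ↦ Subtype.ext (h.injective (Prod.ext hst ?_)), fun i ↦ ?_⟩).trans
    (Fintype.card_fin m)
  · have hs := h.meetAtVertex_of_fst_ne s.2
    rw [show (e s).1 = (e t).1 from hst] at hs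
    exact h.corner_unique _ _ _ hs (h.notMem_range s) (h.meetAtVertex_of_fst_ne t.2)
      (h.notMem_range t)
  · by_contra! hno
    obtain ⟨s, hs⟩ := h.exists_fst_eq i
    obtain ⟨t, ht⟩ := h.exists_fst_eq (nxt i)
    have hall := nxt_induction (p := fun t ↦ (e t).1 = i) hs (fun r hr ↦ by
      by_contra hne
      exact hno ⟨r, hr ▸ hne⟩ hr) t
    exact nxt_ne_self hm i (ht.symm.trans hall)

theorem card_snd_ne (hm : 2 ≤ m) (h : IsBoundaryWalk P L e) (hn : n = m + k)
    [DecidableEq (Set E3)] : Fintype.card {t // (e (nxt t)).2 ≠ (e t).2} = k := by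
  have hcompl : Fintype.card {t // (e (nxt t)).2 ≠ (e t).2} =
      Fintype.card {t // ¬(e (nxt t)).1 ≠ (e t).1} :=
    Fintype.card_congr (Equiv.subtypeEquivRight fun t ↦ not_congr (h.fst_ne_iff hm t).symm)
  rw [hcompl, Fintype.card_subtype_compl, h.card_fst_ne hm, Fintype.card_fin, hn,
    Nat.add_sub_cancel_left]

theorem walksRound (hm : 2 ≤ m) (hL : IsLoop P L) (h : IsBoundaryWalk P L e)
    (hv : IsSimpleEdgeCycleVia P γ v)
    (hseg : ∀ t, segment ℝ (v t) (v (nxt t)) = L (e t).1 ∩ (e t).2)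
    (hC : ∀ i, intrinsicInterior ℝ (L i) ⊆ C) : WalksRound P γ C L := by
  refine ⟨hL, hC, n, v, fun t ↦ (e t).1, hv, fun t ↦ hseg t ▸ inter_subset_left,
    fun t ↦ (h.step t).imp And.left And.left, h.exists_fst_eq, fun _ ↦ ?_⟩
  rw [← Fintype.card_subtype, h.card_fst_ne hm]

theorem exists_outer_walksRound (hP : IsSimplePolytope3 P) (hm : 2 ≤ m)
    (h : IsBoundaryWalk P L e) (hn : n = m + k) (hk : 2 ≤ k) (hv : IsSimpleEdgeCycleVia P γ v)
    (hseg : ∀ t, segment ℝ (v t) (v (nxt t)) = L (e t).1 ∩ (e t).2) :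
    ∃ L' : Fin k → Set E3, IsLoop P L' ∧ Disjoint (range L') (range L) ∧
      ∀ C, (∀ i, intrinsicInterior ℝ (L' i) ⊆ C) → WalksRound P γ C L' := by
  classical
  obtain ⟨L', φ, hφ, hchange, hstay, hsurj⟩ :=
    exists_cyclic_dedup (fun t ↦ (e t).2) (h.card_snd_ne hm hn) (by omega)
  have hadj (j : Fin k) : L' (nxt j) ∈ adjacentFacets P (L' j) := by
    obtain ⟨t, ht, rfl⟩ := hsurj j
    rw [← hchange t ht, hφ, hφ]
    obtain ⟨-, hmeet⟩ | ⟨-, h₂, -⟩ := h.step t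
    · exact hmeet.rotate.mem_adjacentFacets
    · exact (ht h₂).elim
  have hout (j : Fin k) : IsFacetOf (L' j) P ∧ L' j ∉ range L := by
    obtain ⟨t, -, rfl⟩ := hsurj j
    rw [hφ]
    exact ⟨(h.mem_adjacentFacets t).1, h.notMem_range t⟩
  have hL' : IsLoop P L' := ⟨by omega, fun j ↦ (hout j).1,
    fun _ j ↦ hP.isEdgeOf_inter (hout j).1 (hadj j)⟩
  refine ⟨L', hL', disjoint_left.2 (forall_mem_range.2 fun j ↦ (hout j).2), fun C hC ↦ ?_⟩
  refine ⟨hL', hC, n, v, φ, hv, fun t ↦ ?_, fun t ↦ ?_, fun j ↦ ?_, fun _ ↦ ?_⟩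
  · rw [hseg, hφ]
    exact inter_subset_right
  · by_cases ht : (e (nxt t)).2 = (e t).2
    · exact .inl (hstay t ht)
    · exact .inr (hchange t ht)
  · exact (hsurj j).imp fun t ht ↦ ht.2
  · rw [← Fintype.card_subtype]
    refine (Fintype.card_congr (Equiv.subtypeEquivRight fun t ↦ not_congr
      ⟨fun ht ↦ ?_, hstay t⟩)).trans (h.card_snd_ne hm hn)
    rw [← hφ, ht, hφ]

theorem exists_borders (hP : IsSimplePolytope3 P) (hm : 2 ≤ m) (hL : IsSimpleLoop P L)
    (h : IsBoundaryWalk P L e) (hn : n = m + k) (hk : 2 ≤ k) :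
    ∃ L' : Fin k → Set E3, Borders P L L' := by
  have hI : range L ⊆ facets P := range_subset_iff.2 hL.1.2.1
  obtain ⟨v, hv, hseg⟩ := h.exists_isSimpleEdgeCycleVia hP hL (by omega)
  obtain ⟨L', hL', hdisj, hwalk⟩ := h.exists_outer_walksRound hP hm hn hk hv hseg
  obtain ⟨C, hC, hLC⟩ := hP.exists_isCompOf_of_isLoop hI hL.1 (.inl Subset.rfl)
  obtain ⟨C', hC', hLC'⟩ := hP.exists_isCompOf_of_isLoop hI hL' (.inr hdisj)
  refine ⟨L', separatingCurve P (range L), C, C', hC, hC', ?_, h.walksRound hm hL.1 hv hseg hLC,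
    hwalk C' hLC'⟩
  rintro rfl
  let i : Fin m := ⟨0, by omega⟩
  let j : Fin k := ⟨0, by omega⟩
  obtain ⟨x, hx⟩ := (hL.1.2.1 i).1.nonempty_intrinsicInterior
  obtain ⟨y, hy⟩ := (hL'.2.1 j).1.nonempty_intrinsicInterior
  obtain ⟨z, -, rfl⟩ := hC
  exact hdisj.le_bot ⟨mem_range_self j, mem_of_isPreconnected_diff_separatingCurve hP.isPolytope3 hI
    isPreconnected_connectedComponentIn (connectedComponentIn_subset _ _) (mem_range_self i)
    (hL'.2.1 j) ⟨x, hLC i hx, intrinsicInterior_subset hx⟩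
    ⟨y, hLC' j hy, intrinsicInterior_subset hy⟩⟩

end IsBoundaryWalk

/-! ### Four facets around an edge -/

theorem length_eq_ncard_of_nodup {α : Type*} {l : List α} {s : Set α} (hl : l.Nodup)
    (hmem : ∀ x, x ∈ l ↔ x ∈ s) : l.length = s.ncard := by
  classical
  rw [← List.toFinset_card_of_nodup hl, ← ncard_coe_finset]
  exact congrArg ncard (ext fun x ↦ by simp [hmem])

/-- `A` lists, in the order in which they are met when going round `L i` from `L (prv i)` to
`L (nxt i)`, all the facets adjacent to `L i` that do not belong to `L`. -/
structure IsOuterArc {m : ℕ} (P : Set E3) (L : Fin m → Set E3) (i : Fin m) (A : List (Set E3)) :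
    Prop where
  ne_nil : A ≠ []
  nodup : A.Nodup
  mem_iff : ∀ G, G ∈ A ↔ G ∈ adjacentFacets P (L i) ∧ G ∉ range L
  isChain : (L (prv i) :: (A ++ [L (nxt i)])).IsChain (MeetAtVertex P (L i))

namespace IsOuterArc

variable {m : ℕ} {P G : Set E3} {L : Fin m → Set E3} {i j : Fin m} {A : List (Set E3)}

theorem meetAtVertex_head (h : IsOuterArc P L i A) (hG : G ∈ A.head?) :
    MeetAtVertex P (L i) (L (prv i)) G :=
  (List.isChain_cons.1 h.isChain).1 G (List.mem_head?_append_of_mem_head? hG)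

theorem meetAtVertex_getLast (h : IsOuterArc P L i A) (hG : G ∈ A.getLast?) :
    MeetAtVertex P (L i) G (L (nxt i)) :=
  (List.isChain_append.1 h.isChain.tail).2.2 G hG _ rfl

theorem isChain_self (h : IsOuterArc P L i A) : A.IsChain (MeetAtVertex P (L i)) :=
  (List.isChain_append.1 h.isChain.tail).1

/-- `S` lists the facets of `L`, other than `L (prv i)` and `L (nxt i)`, that are adjacent to
`L i`. -/
theorem of_isChain {S : List (Set E3)} (hne : A ≠ [])
    (hnodup : (S ++ L (prv i) :: (A ++ [L (nxt i)])).Nodup)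
    (hmem : ∀ G, G ∈ S ++ L (prv i) :: (A ++ [L (nxt i)]) ↔ G ∈ adjacentFacets P (L i))
    (hchain : (L (prv i) :: (A ++ [L (nxt i)])).IsChain (MeetAtVertex P (L i)))
    (hS : ∀ G ∈ S, G ∈ range L)
    (hadj : ∀ k, L k ∈ adjacentFacets P (L i) → L k ∈ S ∨ k = prv i ∨ k = nxt i) :
    IsOuterArc P L i A := by
  simp only [List.nodup_append, List.nodup_cons, List.mem_cons, List.mem_append] at hnodup
  simp only [List.mem_append, List.mem_cons, List.not_mem_nil, or_false] at hmem
  refine ⟨hne, hnodup.2.1.2.1, fun G ↦ ⟨fun hG ↦ ⟨(hmem G).1 (.inr (.inr (.inl hG))), ?_⟩, ?_⟩,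
    hchain⟩
  · rintro ⟨k, rfl⟩
    obtain hk | rfl | rfl := hadj k ((hmem _).1 (.inr (.inr (.inl hG))))
    · exact hnodup.2.2 _ hk _ (.inr (.inl hG)) rfl
    · exact hnodup.2.1.1 (.inl hG)
    · exact hnodup.2.1.2.2.2 _ hG _ (.inl rfl) rfl
  · rintro ⟨hG, hGL⟩
    obtain h | rfl | h | rfl := (hmem G).2 hG
    · exact absurd (hS G h) hGL
    · exact absurd (mem_range_self _) hGL
    · exact h
    · exact absurd (mem_range_self _) hGL

theorem exists_of_meetAtVertex (hP : IsSimplePolytope3 P)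
    (h : MeetAtVertex P (L i) (L (prv i)) (L (nxt i)))
    (hcard : 3 ≤ (adjacentFacets P (L i)).ncard)
    (hadj : ∀ k, L k ∈ adjacentFacets P (L i) → k = prv i ∨ k = nxt i) :
    ∃ A, IsOuterArc P L i A ∧ A.length + 2 = (adjacentFacets P (L i)).ncard := by
  obtain ⟨A, hnodup, hmem, hchain⟩ := hP.exists_isChain_adjacentFacets h
  have hlen : A.length + 2 = (adjacentFacets P (L i)).ncard := by
    simpa using length_eq_ncard_of_nodup hnodup hmem
  have hne : A ≠ [] := List.ne_nil_of_length_pos (by omega)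
  exact ⟨A, of_isChain (S := []) hne hnodup hmem hchain (by simp) fun k hk ↦ .inr (hadj k hk), hlen⟩

theorem exists_of_meetAtVertex_of_meetAtVertex (hP : IsSimplePolytope3 P)
    (hprv : MeetAtVertex P (L i) (L j) (L (prv i))) (hnxt : MeetAtVertex P (L i) (L j) (L (nxt i)))
    (hne : L (prv i) ≠ L (nxt i)) (hcard : 4 ≤ (adjacentFacets P (L i)).ncard)
    (hadj : ∀ k, L k ∈ adjacentFacets P (L i) → k = j ∨ k = prv i ∨ k = nxt i) :
    ∃ A, IsOuterArc P L i A ∧ A.length + 3 = (adjacentFacets P (L i)).ncard := by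
  obtain ⟨A, hnodup, hmem, hchain⟩ := hP.exists_isChain_adjacentFacets hnxt
  have hlen : A.length + 2 = (adjacentFacets P (L i)).ncard := by
    simpa using length_eq_ncard_of_nodup hnodup hmem
  obtain ⟨B, A, rfl⟩ := List.exists_cons_of_ne_nil (List.ne_nil_of_length_pos (by omega) : A ≠ [])
  rw [List.length_cons] at hlen
  have hBnxt : B ≠ L (nxt i) := by
    rintro rfl
    simp at hnodup
  obtain rfl : B = L (prv i) :=
    (hprv.eq_or_eq hP hnxt hne (List.isChain_cons_cons.1 hchain).1).resolve_right hBnxt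
  have hne : A ≠ [] := List.ne_nil_of_length_pos (by omega)
  exact ⟨A, of_isChain (S := [L j]) hne hnodup hmem hchain.tail (by simp)
    fun k hk ↦ (hadj k hk).imp_left fun hkj ↦ by simp [hkj], by omega⟩

end IsOuterArc

/-- The outer arcs follow each other: the last facet of the arc at `L i` is the first one of the arc
at `L (nxt i)`, since only one facet outside `L` passes through that corner. -/
theorem exists_isBoundaryWalk {m : ℕ} {P : Set E3} {L : Fin m → Set E3}
    {A : Fin m → List (Set E3)} (hA : ∀ i, IsOuterArc P L i (A i))
    (hcorner : ∀ i G H, MeetAtVertex P (L i) (L (nxt i)) G → G ∉ range L →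
      MeetAtVertex P (L i) (L (nxt i)) H → H ∉ range L → G = H) :
    ∃ e : Fin (∑ i, (A i).length) → Fin m × Set E3, IsBoundaryWalk P L e := by
  have hjoin (i : Fin m) : ∀ G ∈ (A i).getLast?, ∀ H ∈ (A (nxt i)).head?,
      MeetAtVertex P (L i) (L (nxt i)) G ∧ H = G := by
    intro G hG H hH
    have hlast := ((hA i).meetAtVertex_getLast hG).swap
    have hhead := (hA (nxt i)).meetAtVertex_head hH
    rw [prv_nxt] at hhead
    exact ⟨hlast, hcorner i H G hhead.swap_left
      (((hA _).mem_iff H).1 (List.mem_of_mem_head? hH)).2 hlast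
      (((hA i).mem_iff G).1 (List.mem_of_mem_getLast? hG)).2⟩
  rw [show ∑ i, (A i).length = ∑ i, ((A i).map (Prod.mk i)).length by simp only [List.length_map]]
  obtain ⟨e, hinj, hrange, hstep⟩ := exists_cyclic_concat (R := BoundaryStep P L)
    (fun i ↦ (A i).map (Prod.mk i)) (by simpa using fun i ↦ (hA i).ne_nil)
    (fun i ↦ (hA i).nodup.map (Prod.mk_right_injective i))
    (fun i j hij ↦ by simp [List.Disjoint, hij.symm])
    (fun i ↦ (List.isChain_map _).2 ((hA i).isChain_self.imp fun _ _ h ↦ .inl ⟨rfl, h⟩))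
    (by
      simp only [List.getLast?_map, List.head?_map, Option.mem_map]
      rintro i _ ⟨G, hG, rfl⟩ _ ⟨H, hH, rfl⟩
      obtain ⟨hmeet, heq⟩ := hjoin i G hG H hH
      exact .inr ⟨rfl, heq, hmeet⟩)
  have hmem (i : Fin m) (G : Set E3) : (i, G) ∈ range e ↔ G ∈ A i := by
    rw [hrange]
    simp
  refine ⟨e, hinj, fun i G ↦ by rw [hmem, (hA i).mem_iff], hstep, fun i ↦ ?_, hcorner⟩
  obtain ⟨G, hG⟩ := List.exists_mem_of_ne_nil _ (hA i).ne_nil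
  obtain ⟨t, ht⟩ := (hmem i G).2 hG
  exact ⟨t, congrArg Prod.fst ht⟩

/-- The facets of `L` surround, in this order, the edge `L 0 ∩ L 2`: its two ends lie in `L 1` and
in `L 3`, and these two facets do not meet. -/
structure SurroundsEdge (P : Set E3) (L : Fin 4 → Set E3) : Prop where
  meetAtVertex_one : MeetAtVertex P (L 0) (L 2) (L 1)
  meetAtVertex_three : MeetAtVertex P (L 0) (L 2) (L 3)
  disjoint : Disjoint (L 1) (L 3)

namespace SurroundsEdge

variable {P G H : Set E3} {L : Fin 4 → Set E3}

theorem ne (h : SurroundsEdge P L) : L 1 ≠ L 3 := by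
  obtain ⟨x, hx⟩ := h.meetAtVertex_one.nonempty
  exact fun heq ↦ h.disjoint.notMem_of_mem_left hx.2 (heq ▸ hx.2)

theorem isEdgeOf_inter (hP : IsSimplePolytope3 P) (h : SurroundsEdge P L) :
    IsEdgeOf (L 0 ∩ L 2) P ∧ ∃ v w : E3, v ≠ w ∧ IsVertexOf v P ∧ IsVertexOf w P ∧
      v ∈ L 0 ∩ L 2 ∧ w ∈ L 0 ∩ L 2 ∧ v ∈ L 1 ∧ w ∈ L 3 := by
  obtain ⟨v, hv⟩ := h.meetAtVertex_one.nonempty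
  obtain ⟨w, hw⟩ := h.meetAtVertex_three.nonempty
  exact ⟨h.meetAtVertex_one.isEdgeOf_inter hP, v, w,
    h.disjoint.ne_of_mem hv.2 hw.2, h.meetAtVertex_one.isVertexOf hP hv,
    h.meetAtVertex_three.isVertexOf hP hw, hv.1, hw.1, hv.2, hw.2⟩

theorem exists_meetAtVertex_nxt (h : SurroundsEdge P L) (i : Fin 4) :
    ∃ j, MeetAtVertex P (L i) (L (nxt i)) (L j) := by
  fin_cases i
  exacts [⟨2, h.meetAtVertex_one.swap⟩, ⟨0, h.meetAtVertex_one.rotate.swap_left⟩,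
    ⟨0, h.meetAtVertex_three.rotate⟩, ⟨2, h.meetAtVertex_three.rotate.rotate⟩]

/-- One end of the edge `L i ∩ L (nxt i)` lies in a further facet of `L`, so only the other end is
left for facets outside `L`. -/
theorem corner_unique (hP : IsSimplePolytope3 P) (h : SurroundsEdge P L) (i : Fin 4)
    (hG : MeetAtVertex P (L i) (L (nxt i)) G) (hGL : G ∉ range L)
    (hH : MeetAtVertex P (L i) (L (nxt i)) H) (hHL : H ∉ range L) : G = H := by
  obtain ⟨j, hj⟩ := h.exists_meetAtVertex_nxt i
  have hjG : L j ≠ G := fun heq ↦ hGL ⟨j, heq⟩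
  exact ((hj.eq_or_eq hP hG hjG hH).resolve_left fun heq ↦ hHL ⟨j, heq.symm⟩).symm

theorem exists_isOuterArc (hP : IsSimplePolytope3 P) (h : SurroundsEdge P L)
    (hcard : ∀ i, 4 ≤ (adjacentFacets P (L i)).ncard) (i : Fin 4) :
    ∃ A, IsOuterArc P L i A ∧ A.length + ![3, 2, 3, 2] i = (adjacentFacets P (L i)).ncard := by
  have hthird (j : Fin 4) : j = i ∨ j = nxt (nxt i) ∨ j = prv i ∨ j = nxt i := by decide +revert
  have hadj (j : Fin 4) (hj : L j ∈ adjacentFacets P (L i)) :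
      j = nxt (nxt i) ∨ j = prv i ∨ j = nxt i :=
    (hthird j).resolve_left fun heq ↦ hj.2.1 (congrArg L heq.symm)
  have hopp {i j : Fin 4} (hij : Disjoint (L i) (L j)) : L j ∉ adjacentFacets P (L i) :=
    fun hj ↦ not_disjoint_iff_nonempty_inter.2 hj.2.2 hij
  have h₁ := h.meetAtVertex_one
  have h₃ := h.meetAtVertex_three
  fin_cases i
  · exact IsOuterArc.exists_of_meetAtVertex_of_meetAtVertex hP h₃ h₁ h.ne.symm (hcard 0) hadj
  · exact IsOuterArc.exists_of_meetAtVertex hP h₁.rotate.rotate (Nat.le_of_lt (hcard 1))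
      fun j hj ↦ (hadj j hj).resolve_left (by rintro rfl; exact hopp h.disjoint hj)
  · exact IsOuterArc.exists_of_meetAtVertex_of_meetAtVertex hP h₁.swap_left h₃.swap_left h.ne
      (hcard 2) hadj
  · exact IsOuterArc.exists_of_meetAtVertex hP h₃.rotate.rotate.swap (Nat.le_of_lt (hcard 3))
      fun j hj ↦ (hadj j hj).resolve_left (by rintro rfl; exact hopp h.disjoint.symm hj)

theorem exists_borders (hP : IsFlag3Polytope P) (hL : IsSimpleLoop P L) (h : SurroundsEdge P L) :
    ∃ k, k + 14 = ∑ i, facetEdges P (L i) ∧ 2 ≤ k ∧ ∃ L' : Fin k → Set E3, Borders P L L' := by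
  have hS := hP.isSimplePolytope3
  have hcard (i : Fin 4) : 4 ≤ (adjacentFacets P (L i)).ncard := by
    obtain ⟨j, hj⟩ := h.exists_meetAtVertex_nxt i
    exact hP.four_le_ncard_adjacentFacets hj
  choose A hA hlen using h.exists_isOuterArc hS hcard
  obtain ⟨e, he⟩ := exists_isBoundaryWalk hA
    fun i G H hG hGL hH hHL ↦ h.corner_unique hS i hG hGL hH hHL
  have hsum : ∑ i, facetEdges P (L i) = ∑ i, (A i).length + 10 := by
    simp only [hS.facetEdges_eq_ncard (hL.1.2.1 _), ← hlen, Finset.sum_add_distrib]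
    rfl
  have hfour : 16 ≤ ∑ i, facetEdges P (L i) := by
    simp only [hS.facetEdges_eq_ncard (hL.1.2.1 _)]
    simpa using Finset.card_nsmul_le_sum Finset.univ _ 4 fun i _ ↦ hcard i
  exact ⟨∑ i, facetEdges P (L i) - 14, by omega, by omega,
    he.exists_borders hS (by norm_num) hL (by omega) (by omega)⟩

end SurroundsEdge

/-! ### Simple 4-loops -/

theorem eq_nxt_or_eq_nxt_nxt {p q : Fin 4} (hpq : p ≠ q) :
    q = nxt p ∨ p = nxt q ∨ q = nxt (nxt p) := by
  decide +revert

theorem IsLoop.isBelt_of_disjoint {P : Set E3} {L : Fin 4 → Set E3} (hL : IsLoop P L)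
    (h₀₂ : Disjoint (L 0) (L 2)) (h₁₃ : Disjoint (L 1) (L 3)) : IsBelt P L := by
  have hopp (p : Fin 4) : Disjoint (L p) (L (nxt (nxt p))) := by
    fin_cases p
    exacts [h₀₂, h₁₃, h₀₂.symm, h₁₃.symm]
  have hadj (p : Fin 4) := (hL.mem_adjacentFacets (by norm_num) p).2.2
  refine ⟨by norm_num, hL, by norm_num, fun _ p q hpq ↦ ⟨fun hne ↦ ?_, ?_⟩⟩
  · rw [← not_disjoint_iff_nonempty_inter] at hne
    obtain h | h | rfl := eq_nxt_or_eq_nxt_nxt hpq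
    exacts [.inl h, .inr h, (hne (hopp p)).elim]
  · rintro (rfl | rfl)
    exacts [hadj p, inter_comm (L q) _ ▸ hadj q]

theorem IsFlag3Polytope.surroundsEdge {P : Set E3} {L : Fin 4 → Set E3} (hP : IsFlag3Polytope P)
    (hL : IsSimpleLoop P L) (h : ¬Disjoint (L 0) (L 2)) : SurroundsEdge P L := by
  rw [not_disjoint_iff_nonempty_inter] at h
  have hfacet := hL.1.2.1
  have hadj := hL.1.mem_adjacentFacets (by norm_num)
  have h₀₂ : L 2 ∈ adjacentFacets P (L 0) := ⟨hfacet 2, hL.2.ne (by decide), h⟩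
  refine ⟨(hP.meetAtVertex (hfacet 0) (hadj 0) h₀₂ (hadj 1)).swap, hP.meetAtVertex (hfacet 0) h₀₂
    (mem_adjacentFacets_symm (hfacet 3) (hadj 3)) (hadj 2), ?_⟩
  by_contra h₁₃
  rw [not_disjoint_iff_nonempty_inter] at h₁₃
  have hopp (p : Fin 4) : (L p ∩ L (nxt (nxt p))).Nonempty := by
    fin_cases p
    exacts [h, h₁₃, inter_comm (L 0) _ ▸ h, inter_comm (L 1) _ ▸ h₁₃]
  refine hP.not_pairwise_inter_nonempty (range_subset_iff.2 hfacet) ?_ ?_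
  · rw [ncard_range_of_injective hL.2, Nat.card_fin]
  · rintro _ ⟨p, rfl⟩ _ ⟨q, rfl⟩ hpq
    obtain rfl | rfl | rfl := eq_nxt_or_eq_nxt_nxt (ne_of_apply_ne L hpq)
    exacts [(hadj p).2.2, inter_comm (L q) _ ▸ (hadj q).2.2, hopp p]

theorem IsSimpleLoop.comp_nxt {P : Set E3} {k : ℕ} {L : Fin k → Set E3} (hL : IsSimpleLoop P L) :
    IsSimpleLoop P fun i ↦ L (nxt i) :=
  ⟨⟨hL.1.1, fun i ↦ hL.1.2.1 (nxt i), fun hk i ↦ hL.1.2.2 hk (nxt i)⟩, hL.2.comp nxt_injective⟩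

theorem Borders.of_comp_nxt {P : Set E3} {k k' : ℕ} {L : Fin k → Set E3} {L' : Fin k' → Set E3}
    (hL : IsLoop P L) (h : Borders P (fun i ↦ L (nxt i)) L') : Borders P L L' := by
  obtain ⟨γ, C, C', hC, hC', hne, ⟨-, hLC, n, v, φ, hv, hφ, hstep, hsurj, hcard⟩, hL'⟩ := h
  refine ⟨γ, C, C', hC, hC', hne, ⟨hL, fun i ↦ ?_, n, v, fun t ↦ nxt (φ t), hv, hφ,
    fun t ↦ (hstep t).imp (congrArg nxt) (congrArg nxt), ?_, ?_⟩, hL'⟩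
  · simpa only [nxt_prv] using hLC (prv i)
  · exact (Function.RightInverse.surjective nxt_prv).comp hsurj
  · simpa only [ne_eq, nxt_injective.eq_iff] using hcard

/-- If a simple 4-loop in a flag 3-polytope is not a 4-belt, then it consists of the
four facets surrounding an edge (two opposite facets of the loop meet along an edge
whose endpoints lie on the two other facets), and it borders a `k`-loop with
`k = sᵢ + sⱼ + sₖ + sₗ - 14 ≥ 2`. -/
theorem four_loop_lemma (P : Set E3) (hP : IsFlag3Polytope P)
    (L : Fin 4 → Set E3) (hL : IsSimpleLoop P L) (hnb : ¬ IsBelt P L) :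
    ((IsEdgeOf (L 0 ∩ L 2) P ∧ ∃ v w : E3, v ≠ w ∧ IsVertexOf v P ∧ IsVertexOf w P ∧
        v ∈ L 0 ∩ L 2 ∧ w ∈ L 0 ∩ L 2 ∧ v ∈ L 1 ∧ w ∈ L 3) ∨
     (IsEdgeOf (L 1 ∩ L 3) P ∧ ∃ v w : E3, v ≠ w ∧ IsVertexOf v P ∧ IsVertexOf w P ∧
        v ∈ L 1 ∩ L 3 ∧ w ∈ L 1 ∩ L 3 ∧ v ∈ L 0 ∧ w ∈ L 2)) ∧
    2 ≤ facetEdges P (L 0) + facetEdges P (L 1) + facetEdges P (L 2) +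
        facetEdges P (L 3) - 14 ∧
    ∃ L' : Fin (facetEdges P (L 0) + facetEdges P (L 1) + facetEdges P (L 2) +
        facetEdges P (L 3) - 14) → Set E3, Borders P L L' := by
  have hdisj : ¬Disjoint (L 0) (L 2) ∨ ¬Disjoint (L 1) (L 3) := by
    by_contra! h
    exact hnb (hL.1.isBelt_of_disjoint h.1 h.2)
  obtain h₀₂ | h₁₃ := hdisj
  · have hL₀₂ := hP.surroundsEdge hL h₀₂
    obtain ⟨k, hk, hk₂, L', hL'⟩ := hL₀₂.exists_borders hP hL
    rw [Fin.sum_univ_four] at hk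
    obtain rfl := Nat.eq_sub_of_add_eq hk
    exact ⟨.inl (hL₀₂.isEdgeOf_inter hP.isSimplePolytope3), hk₂, L', hL'⟩
  · have hL₁₃ := hP.surroundsEdge hL.comp_nxt h₁₃
    obtain ⟨hedge, v, w, hvw, hv, hw, hv', hw', hv₂, hw₀⟩ :=
      hL₁₃.isEdgeOf_inter hP.isSimplePolytope3
    obtain ⟨k, hk, hk₂, L', hL'⟩ := hL₁₃.exists_borders hP hL.comp_nxt
    rw [(Finite.injective_iff_bijective.1 nxt_injective).sum_comp fun i ↦ facetEdges P (L i),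
      Fin.sum_univ_four] at hk
    obtain rfl := Nat.eq_sub_of_add_eq hk
    exact ⟨.inr ⟨hedge, w, v, hvw.symm, hw, hv, hw', hv', hw₀, hv₂⟩, hk₂, L', hL'.of_comp_nxt hL.1⟩
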